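/- arXiv:1302.1601 — 5 statements merged into one kernel-verified Lean document; each statement's English description precedes it below -/
import Mathlib

section
/- Capacity region of the symmetric 5-message cyclic index coding problem. Consider the index coding problem with 5 messages and side information sets A_j = {j−1, j+1} (indices modulo 5), i.e., (1|5,2), (2|1,3), (3|2,4), (4|3,5), (5|4,1). Its capacity region is exactly the set of tuples (R_1,...,R_5) of nonnegative reals satisfying R_1 + R_3 ≤ 1, R_2 + R_4 ≤ 1, R_3 + R_5 ≤ 1, R_4 + R_1 ≤ 1, R_5 + R_2 ≤ 1, and R_1 + R_2 + R_3 + R_4 + R_5 ≤ 2. -/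
open Finset Filter

/-- Number of messages at rate `R` and block length `n`: `⌈2^{nR}⌉`. -/
noncomputable def msgCard (n : ℕ) (R : ℝ) : ℕ := ⌈(2 : ℝ) ^ ((n : ℝ) * R)⌉₊

/-- A `(2^{nR_1},…,2^{nR_N}, n)` index code for the index coding problem with
side information sets `A j`. -/
structure IndexCode (N : ℕ) (A : Fin N → Finset (Fin N)) (R : Fin N → ℝ) (n : ℕ) where
  enc : (∀ j : Fin N, Fin (msgCard n (R j))) → (Fin n → Bool)
  dec : ∀ j : Fin N, (Fin n → Bool) →
    (∀ k : {k : Fin N // k ∈ A j}, Fin (msgCard n (R k.1))) → Fin (msgCard n (R j))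

/-- Average probability of error of an index code (messages uniform). -/
noncomputable def IndexCode.Pe {N : ℕ} {A : Fin N → Finset (Fin N)} {R : Fin N → ℝ} {n : ℕ}
    (C : IndexCode N A R n) : ℝ :=
  (Nat.card {m : ∀ j : Fin N, Fin (msgCard n (R j)) //
      ∃ j : Fin N, C.dec j (C.enc m) (fun k => m k.1) ≠ m j} : ℝ) /
    (Nat.card (∀ j : Fin N, Fin (msgCard n (R j))) : ℝ)

/-- A rate tuple of nonnegative reals is achievable if there is a sequence of codes
whose probability of error tends to zero. -/
def IndexAchievable (N : ℕ) (A : Fin N → Finset (Fin N)) (R : Fin N → ℝ) : Prop :=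
  (∀ j, 0 ≤ R j) ∧
    ∃ C : (n : ℕ) → IndexCode N A R n, Tendsto (fun n => (C n).Pe) atTop (nhds 0)

/-- Cauchy-Schwarz style counting bound behind the sum-rate constraint. -/
lemma five_key {T X A0 A1 A2 A3 A4 : Type} [Fintype X] [Fintype A0] [Fintype A1] [Fintype A2]
    [Fintype A3] [Fintype A4] (G : Finset T) (x : T → X)
    (a0 : T → A0) (a1 : T → A1) (a2 : T → A2) (a3 : T → A3) (a4 : T → A4)
    (h0 : ∀ s ∈ G, ∀ t ∈ G, x s = x t → a4 s = a4 t → a1 s = a1 t → a0 s = a0 t)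
    (h1 : ∀ s ∈ G, ∀ t ∈ G, x s = x t → a0 s = a0 t → a2 s = a2 t → a1 s = a1 t)
    (h2 : ∀ s ∈ G, ∀ t ∈ G, x s = x t → a1 s = a1 t → a3 s = a3 t → a2 s = a2 t)
    (h3 : ∀ s ∈ G, ∀ t ∈ G, x s = x t → a2 s = a2 t → a4 s = a4 t → a3 s = a3 t)
    (h4 : ∀ s ∈ G, ∀ t ∈ G, x s = x t → a3 s = a3 t → a0 s = a0 t → a4 s = a4 t)
    (hall : ∀ s ∈ G, ∀ t ∈ G, a0 s = a0 t → a1 s = a1 t → a2 s = a2 t → a3 s = a3 t →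
      a4 s = a4 t → s = t) :
    (#G : ℝ) ^ 2 ≤ (Fintype.card X : ℝ) ^ 2 * (Fintype.card A0 * Fintype.card A1 *
      Fintype.card A2 * Fintype.card A3 * Fintype.card A4) := by
  classical
  let c : T → X × A0 × A1 := fun t => (x t, a0 t, a1 t)
  let F : X × A0 × A1 → Finset T := fun v => G.filter (fun t => c t = v)
  let p : X × A0 × A1 → Finset A2 := fun v => (F v).image a2
  let q : X × A0 × A1 → Finset A4 := fun v => (F v).image a4
  have hF : ∀ v t, t ∈ F v ↔ t ∈ G ∧ x t = v.1 ∧ a0 t = v.2.1 ∧ a1 t = v.2.2 := by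
    intro v t
    simp [F, c, Prod.ext_iff]
  have hG : (#G : ℝ) = ∑ v, (#(F v) : ℝ) := by
    have : #G = ∑ v, #(F v) := Finset.card_eq_sum_card_fiberwise (fun _ _ => by simp)
    exact_mod_cast this
  have hpq : ∀ v, #(F v) ≤ #(p v) * #(q v) := by
    intro v
    rw [← Finset.card_product]
    apply Finset.card_le_card_of_injOn (fun t => (a2 t, a4 t))
    · intro t ht
      simp only [Finset.coe_product, Set.mem_prod, Finset.mem_coe]
      exact ⟨Finset.mem_image_of_mem _ ht, Finset.mem_image_of_mem _ ht⟩
    · intro s hs t ht hst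
      obtain ⟨hs, e1, e2, e3⟩ := (hF v s).1 hs
      obtain ⟨ht, f1, f2, f3⟩ := (hF v t).1 ht
      simp only [Prod.mk.injEq] at hst
      have hx : x s = x t := e1.trans f1.symm
      exact hall s hs t ht (e2.trans f2.symm) (e3.trans f3.symm) hst.1
        (h3 s hs t ht hx hst.1 hst.2) hst.2
  have hr : ∀ v, #(F v) ≤ Fintype.card A3 := by
    intro v
    rw [← Finset.card_univ]
    apply Finset.card_le_card_of_injOn a3
    · intro t ht
      simp
    · intro s hs t ht hst
      obtain ⟨hs, e1, e2, e3⟩ := (hF v s).1 hs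
      obtain ⟨ht, f1, f2, f3⟩ := (hF v t).1 ht
      have hx : x s = x t := e1.trans f1.symm
      exact hall s hs t ht (e2.trans f2.symm) (e3.trans f3.symm)
        (h2 s hs t ht hx (e3.trans f3.symm) hst) hst (h4 s hs t ht hx hst (e2.trans f2.symm))
  have hp : ∑ v, #(p v) ≤ Fintype.card X * Fintype.card A0 * Fintype.card A2 := by
    rw [← Finset.card_sigma]
    have : Fintype.card X * Fintype.card A0 * Fintype.card A2
      = #(Finset.univ : Finset (X × A0 × A2)) := by simp [mul_assoc]
    rw [this]
    apply Finset.card_le_card_of_injOn (fun z => (z.1.1, z.1.2.1, z.2))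
    · intro t ht
      simp
    · rintro ⟨⟨v1, v2, v3⟩, y⟩ hv ⟨⟨w1, w2, w3⟩, z⟩ hw h
      simp only [Finset.coe_sigma, Set.mem_sigma_iff, Finset.mem_coe, p, Finset.mem_image, hF]
        at hv hw
      obtain ⟨-, s, ⟨hs, e1, e2, e3⟩, e4⟩ := hv
      obtain ⟨-, t, ⟨ht, f1, f2, f3⟩, f4⟩ := hw
      simp only [Prod.mk.injEq] at h
      obtain ⟨g1, g2, g3⟩ := h
      subst g1 g2 g3
      have := h1 s hs t ht (e1.trans f1.symm) (e2.trans f2.symm) (e4.trans f4.symm)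
      have : v3 = w3 := by rw [← e3, ← f3, this]
      subst this
      rfl
  have hq : ∑ v, #(q v) ≤ Fintype.card X * Fintype.card A1 * Fintype.card A4 := by
    rw [← Finset.card_sigma]
    have : Fintype.card X * Fintype.card A1 * Fintype.card A4
      = #(Finset.univ : Finset (X × A1 × A4)) := by simp [mul_assoc]
    rw [this]
    apply Finset.card_le_card_of_injOn (fun z => (z.1.1, z.1.2.2, z.2))
    · intro t ht
      simp
    · rintro ⟨⟨v1, v2, v3⟩, y⟩ hv ⟨⟨w1, w2, w3⟩, z⟩ hw h
      simp only [Finset.coe_sigma, Set.mem_sigma_iff, Finset.mem_coe, q, Finset.mem_image, hF]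
        at hv hw
      obtain ⟨-, s, ⟨hs, e1, e2, e3⟩, e4⟩ := hv
      obtain ⟨-, t, ⟨ht, f1, f2, f3⟩, f4⟩ := hw
      simp only [Prod.mk.injEq] at h
      obtain ⟨g1, g2, g3⟩ := h
      subst g1 g2 g3
      have := h0 s hs t ht (e1.trans f1.symm) (e4.trans f4.symm) (e3.trans f3.symm)
      have : v2 = w2 := by rw [← e2, ← f2, this]
      subst this
      rfl
  have hp' : ∑ v, (#(p v) : ℝ) ≤ Fintype.card X * Fintype.card A0 * Fintype.card A2 := by
    exact_mod_cast hp
  have hq' : ∑ v, (#(q v) : ℝ) ≤ Fintype.card X * Fintype.card A1 * Fintype.card A4 := by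
    exact_mod_cast hq
  have hcs : (∑ v, (#(F v) : ℝ)) ^ 2 ≤
      (∑ v, (Fintype.card A3 * #(p v) : ℝ)) * ∑ v, (#(q v) : ℝ) := by
    apply Finset.sum_sq_le_sum_mul_sum_of_sq_le_mul
    · intro v _; positivity
    · intro v _; positivity
    · intro v _
      have k1 : (#(F v) : ℝ) ≤ #(p v) * #(q v) := by exact_mod_cast hpq v
      have k2 : (#(F v) : ℝ) ≤ Fintype.card A3 := by exact_mod_cast hr v
      rw [sq, mul_assoc]
      exact mul_le_mul k2 k1 (by positivity) (by positivity)
  rw [hG]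
  refine hcs.trans ?_
  rw [← Finset.mul_sum]
  calc _ ≤ ((Fintype.card A3 : ℝ) * (Fintype.card X * Fintype.card A0 * Fintype.card A2)) *
        (Fintype.card X * Fintype.card A1 * Fintype.card A4) :=
        mul_le_mul (mul_le_mul_of_nonneg_left hp' (Nat.cast_nonneg _)) hq'
          (Finset.sum_nonneg fun _ _ => Nat.cast_nonneg _) (by positivity)
    _ = _ := by ring

/-- Counting bound behind the pairwise constraints. -/
lemma pair_key {T X A0 A1 A2 A3 A4 : Type} [Fintype X] [Fintype A1]
    [Fintype A3] [Fintype A4] (G : Finset T) (x : T → X)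
    (a0 : T → A0) (a1 : T → A1) (a2 : T → A2) (a3 : T → A3) (a4 : T → A4)
    (h0 : ∀ s ∈ G, ∀ t ∈ G, x s = x t → a4 s = a4 t → a1 s = a1 t → a0 s = a0 t)
    (h2 : ∀ s ∈ G, ∀ t ∈ G, x s = x t → a1 s = a1 t → a3 s = a3 t → a2 s = a2 t)
    (hall : ∀ s ∈ G, ∀ t ∈ G, a0 s = a0 t → a1 s = a1 t → a2 s = a2 t → a3 s = a3 t →
      a4 s = a4 t → s = t) :
    (#G : ℝ) ≤ (Fintype.card X : ℝ) * (Fintype.card A1 * Fintype.card A3 * Fintype.card A4) := by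
  classical
  have : #G ≤ #(Finset.univ : Finset (X × A1 × A3 × A4)) := by
    apply Finset.card_le_card_of_injOn (fun t => (x t, a1 t, a3 t, a4 t))
    · intro t ht
      simp
    · intro s hs t ht h
      simp only [Prod.mk.injEq] at h
      obtain ⟨e, e1, e3, e4⟩ := h
      exact hall s hs t ht (h0 s hs t ht e e4 e1) e1 (h2 s hs t ht e e1 e3) e3 e4
  have h : #(Finset.univ : Finset (X × A1 × A3 × A4)) =
    Fintype.card X * (Fintype.card A1 * Fintype.card A3 * Fintype.card A4) := by
    simp [mul_assoc]
  rw [h] at this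
  exact_mod_cast this

abbrev cycA : Fin 5 → Finset (Fin 5) := fun j => ({j - 1, j + 1} : Finset (Fin 5))

lemma msgCard_ge (n : ℕ) (R : ℝ) : (2 : ℝ) ^ ((n : ℝ) * R) ≤ msgCard n R := Nat.le_ceil _

lemma msgCard_pos (n : ℕ) (R : ℝ) : 0 < msgCard n R := Nat.ceil_pos.2 (by positivity)

lemma card_all (n : ℕ) (R : Fin 5 → ℝ) :
    (Nat.card (∀ j : Fin 5, Fin (msgCard n (R j)))) =
      msgCard n (R 0) * msgCard n (R 1) * msgCard n (R 2) * msgCard n (R 3) * msgCard n (R 4) := by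
  rw [Nat.card_eq_fintype_card, Fintype.card_pi, Fin.prod_univ_five]
  simp

/-- Set of correctly decoded tuples. -/
lemma good_set {n : ℕ} {R : Fin 5 → ℝ} (C : IndexCode 5 cycA R n) (h : C.Pe < 1 / 2) :
    ∃ G : Finset (∀ j : Fin 5, Fin (msgCard n (R j))),
      (Nat.card (∀ j : Fin 5, Fin (msgCard n (R j))) : ℝ) ≤ 2 * #G ∧
      ∀ j, ∀ s ∈ G, ∀ t ∈ G, C.enc s = C.enc t → s (j - 1) = t (j - 1) → s (j + 1) = t (j + 1) →
        s j = t j := by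
  classical
  let P : (∀ j : Fin 5, Fin (msgCard n (R j))) → Prop := fun m =>
    ∃ j : Fin 5, C.dec j (C.enc m) (fun k => m k.1) ≠ m j
  refine ⟨Finset.univ.filter (fun m => ¬ P m), ?_, ?_⟩
  · have h1 : #(Finset.univ.filter P) + #(Finset.univ.filter (fun m => ¬ P m)) =
        Nat.card (∀ j : Fin 5, Fin (msgCard n (R j))) := by
      rw [Finset.card_filter_add_card_filter_not, Finset.card_univ, Nat.card_eq_fintype_card]
    have h2 : Nat.card {m // P m} = #(Finset.univ.filter P) := by
      rw [Nat.card_eq_fintype_card, Fintype.card_subtype]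
    have h3 : C.Pe = (Nat.card {m // P m} : ℝ) /
      (Nat.card (∀ j : Fin 5, Fin (msgCard n (R j))) : ℝ) := rfl
    have hpos : (0 : ℝ) < Nat.card (∀ j : Fin 5, Fin (msgCard n (R j))) := by
      rw [card_all]
      have := fun j => msgCard_pos n (R j)
      exact_mod_cast (by simp [this])
    rw [h3, h2, div_lt_iff₀ hpos] at h
    have h1' : (#(Finset.univ.filter P) : ℝ) + #(Finset.univ.filter (fun m => ¬ P m)) =
        Nat.card (∀ j : Fin 5, Fin (msgCard n (R j))) := by exact_mod_cast h1
    linarith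
  · intro j s hs t ht e e1 e2
    simp only [P, Finset.mem_filter, Finset.mem_univ, true_and, not_exists, not_not] at hs ht
    rw [← hs j, ← ht j, e]
    congr 1
    funext k
    obtain ⟨k, hk⟩ := k
    simp only [Finset.mem_insert, Finset.mem_singleton] at hk
    rcases hk with rfl | rfl
    · exact e1
    · exact e2

lemma exp_bound {a b : ℝ} (h : (2 : ℝ) ^ a ≤ 2 ^ b) : a ≤ b :=
  (Real.rpow_le_rpow_left_iff (by norm_num)).1 h

lemma lim_bound {a b c : ℝ} (h : ∀ᶠ n : ℕ in atTop, (n : ℝ) * a ≤ n * b + c) : a ≤ b := by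
  by_contra hab
  push Not at hab
  have h1 : Tendsto (fun n : ℕ => (n : ℝ) * (a - b)) atTop atTop :=
    tendsto_natCast_atTop_atTop.atTop_mul_const (by linarith)
  obtain ⟨n, hn, hn'⟩ := (h.and (h1.eventually_gt_atTop c)).exists
  nlinarith

lemma pair_rate {n : ℕ} {T : Type} {r0 r2 : ℝ} {m0 m1 m2 m3 m4 : ℕ}
    (G : Finset T)
    (h0 : (2 : ℝ) ^ ((n : ℝ) * r0) ≤ m0) (h2 : (2 : ℝ) ^ ((n : ℝ) * r2) ≤ m2)
    (p1 : 0 < m1) (p3 : 0 < m3) (p4 : 0 < m4)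
    (hG : m0 * m1 * m2 * m3 * m4 ≤ 2 * (#G : ℝ))
    (hk : (#G : ℝ) ≤ 2 ^ n * (m1 * m3 * m4)) : (n : ℝ) * (r0 + r2) ≤ n * 1 + 1 := by
  have q : (0 : ℝ) < m1 * m3 * m4 := by positivity
  have h : (m0 * m2 : ℝ) ≤ 2 * 2 ^ n := by
    refine le_of_mul_le_mul_right ?_ q
    nlinarith
  apply exp_bound
  rw [mul_add, Real.rpow_add (by norm_num), Real.rpow_add (by norm_num), mul_one,
    Real.rpow_natCast, Real.rpow_one]
  calc _ ≤ (m0 * m2 : ℝ) := by gcongr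
    _ ≤ _ := by linarith

lemma converse (R : Fin 5 → ℝ) (h : IndexAchievable 5 cycA R) :
    (∀ j, 0 ≤ R j) ∧ (∀ j : Fin 5, R j + R (j + 2) ≤ 1) ∧
        R 0 + R 1 + R 2 + R 3 + R 4 ≤ 2 := by
  obtain ⟨hR, C, hC⟩ := h
  have hev : ∀ᶠ n in atTop, (C n).Pe < 1 / 2 := hC.eventually_lt_const (by norm_num)
  have hX : ∀ n : ℕ, (Fintype.card (Fin n → Bool) : ℝ) = 2 ^ n := by intro n; simp
  refine ⟨hR, ?_, ?_⟩
  · intro j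
    apply lim_bound (c := 1)
    filter_upwards [hev] with n hn
    obtain ⟨G, hG, hd⟩ := good_set (C n) hn
    rw [card_all] at hG
    have g := fun j => msgCard_ge n (R j)
    have pp := fun j => msgCard_pos n (R j)
    have d0 := hd 0
    have d1 := hd 1
    have d2 := hd 2
    have d3 := hd 3
    have d4 := hd 4
    have hall : ∀ s t : (∀ j : Fin 5, Fin (msgCard n (R j))), s 0 = t 0 → s 1 = t 1 →
        s 2 = t 2 → s 3 = t 3 → s 4 = t 4 → s = t := by
      intro s t e0 e1 e2 e3 e4
      funext j
      fin_cases j <;> assumption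
    push_cast at hG
    fin_cases j
    · have hk := pair_key G (C n).enc (fun t => t 0) (fun t => t 1) (fun t => t 2) (fun t => t 3) (fun t => t 4)
        d0 d2 (fun s _ t _ e0 e1 e2 e3 e4 => hall s t e0 e1 e2 e3 e4)
      rw [hX] at hk
      simp only [Fintype.card_fin] at hk
      exact pair_rate G (g 0) (g 2) (pp 1) (pp 3) (pp 4) (by linarith) hk
    · have hk := pair_key G (C n).enc (fun t => t 1) (fun t => t 2) (fun t => t 3) (fun t => t 4) (fun t => t 0)
        d1 d3 (fun s _ t _ e1 e2 e3 e4 e0 => hall s t e0 e1 e2 e3 e4)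
      rw [hX] at hk
      simp only [Fintype.card_fin] at hk
      exact pair_rate G (g 1) (g 3) (pp 2) (pp 4) (pp 0) (by linarith) hk
    · have hk := pair_key G (C n).enc (fun t => t 2) (fun t => t 3) (fun t => t 4) (fun t => t 0) (fun t => t 1)
        d2 d4 (fun s _ t _ e2 e3 e4 e0 e1 => hall s t e0 e1 e2 e3 e4)
      rw [hX] at hk
      simp only [Fintype.card_fin] at hk
      exact pair_rate G (g 2) (g 4) (pp 3) (pp 0) (pp 1) (by linarith) hk
    · have hk := pair_key G (C n).enc (fun t => t 3) (fun t => t 4) (fun t => t 0) (fun t => t 1) (fun t => t 2)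
        d3 d0 (fun s _ t _ e3 e4 e0 e1 e2 => hall s t e0 e1 e2 e3 e4)
      rw [hX] at hk
      simp only [Fintype.card_fin] at hk
      exact pair_rate G (g 3) (g 0) (pp 4) (pp 1) (pp 2) (by linarith) hk
    · have hk := pair_key G (C n).enc (fun t => t 4) (fun t => t 0) (fun t => t 1) (fun t => t 2) (fun t => t 3)
        d4 d1 (fun s _ t _ e4 e0 e1 e2 e3 => hall s t e0 e1 e2 e3 e4)
      rw [hX] at hk
      simp only [Fintype.card_fin] at hk
      exact pair_rate G (g 4) (g 1) (pp 0) (pp 2) (pp 3) (by linarith) hk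
  · apply lim_bound (c := 2)
    filter_upwards [hev] with n hn
    obtain ⟨G, hG, hd⟩ := good_set (C n) hn
    rw [card_all] at hG
    have hk := five_key G (C n).enc (fun t => t 0) (fun t => t 1) (fun t => t 2) (fun t => t 3)
      (fun t => t 4) (hd 0) (hd 1) (hd 2) (hd 3) (hd 4) (by
        intro s _ t _ e0 e1 e2 e3 e4
        funext j
        fin_cases j <;> assumption)
    rw [hX] at hk
    simp only [Fintype.card_fin] at hk
    push_cast at hG
    set M : ℝ := (msgCard n (R 0) * msgCard n (R 1) * msgCard n (R 2) * msgCard n (R 3) *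
      msgCard n (R 4) : ℝ) with hM
    have hMpos : 0 < M := by
      have pp := fun j => msgCard_pos n (R j)
      have := pp 0
      have := pp 1
      have := pp 2
      have := pp 3
      have := pp 4
      positivity
    have h1 : M ≤ 4 * (2 ^ n) ^ 2 := by
      refine le_of_mul_le_mul_right ?_ hMpos
      nlinarith
    have h2 : (2 : ℝ) ^ ((n : ℝ) * (R 0 + R 1 + R 2 + R 3 + R 4)) ≤ M := by
      simp only [mul_add, Real.rpow_add (show (0 : ℝ) < 2 by norm_num), hM]
      gcongr <;> exact msgCard_ge _ _
    apply exp_bound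
    refine h2.trans (h1.trans (le_of_eq ?_))
    rw [Real.rpow_add (by norm_num), Real.rpow_mul (by norm_num), Real.rpow_natCast]
    norm_num
    ring

lemma exists_code (n : ℕ) (R : Fin 5 → ℝ) (k : Fin 5 → ℕ) (hk : ∑ j, k j ≤ n)
    (hM : ∀ j, msgCard n (R j) ≤ 2 ^ k j * 2 ^ k (j - 1)) :
    ∃ C : IndexCode 5 cycA R n, C.Pe = 0 := by
  classical
  let e0 : (∀ j : Fin 5, Fin (msgCard n (R j))) → ∀ e : Fin 5, Fin (2 ^ k e) := fun m e =>
    ⟨((m e).val % 2 ^ k e + (m (e + 1)).val / 2 ^ k (e + 1)) % 2 ^ k e,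
      Nat.mod_lt _ (by positivity)⟩
  obtain ⟨ι⟩ : Nonempty ((∀ e : Fin 5, Fin (2 ^ k e)) ↪ (Fin n → Bool)) := by
    apply Function.Embedding.nonempty_of_card_le
    simp only [Fintype.card_pi, Fintype.card_fin, Fintype.card_bool, Finset.prod_const,
      Finset.card_univ]
    rw [Finset.prod_pow_eq_pow_sum]
    exact Nat.pow_le_pow_right (by norm_num) hk
  have key : ∀ m m' : (∀ j : Fin 5, Fin (msgCard n (R j))), ∀ j, ι (e0 m) = ι (e0 m') →
      m (j - 1) = m' (j - 1) → m (j + 1) = m' (j + 1) → m j = m' j := by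
    intro m m' j h h1 h2
    have h := ι.injective h
    have hv : ∀ e, ((m e).val % 2 ^ k e + (m (e + 1)).val / 2 ^ k (e + 1)) % 2 ^ k e =
        ((m' e).val % 2 ^ k e + (m' (e + 1)).val / 2 ^ k (e + 1)) % 2 ^ k e := by
      intro e
      exact congrArg Fin.val (congrFun h e)
    have hlt : (m j).val < 2 ^ k j * 2 ^ k (j - 1) := (m j).2.trans_le (hM j)
    have hlt' : (m' j).val < 2 ^ k j * 2 ^ k (j - 1) := (m' j).2.trans_le (hM j)
    have a1 : (m j).val % 2 ^ k j = (m' j).val % 2 ^ k j := by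
      have := hv j
      rw [h2] at this
      have := Nat.ModEq.add_right_cancel' _ (show Nat.ModEq _ _ _ from this)
      simpa [Nat.ModEq] using this
    have a2 : (m j).val / 2 ^ k j = (m' j).val / 2 ^ k j := by
      have := hv (j - 1)
      rw [h1] at this
      have := Nat.ModEq.add_left_cancel' _ (show Nat.ModEq _ _ _ from this)
      have := Nat.ModEq.eq_of_lt_of_lt this
      generalize hu : (fun i => (m i).val) = u at *
      generalize hu' : (fun i => (m' i).val) = u' at *
      have b : ∀ i, (m i).val = u i := fun i => by rw [← hu]
      have b' : ∀ i, (m' i).val = u' i := fun i => by rw [← hu']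
      simp only [b, b', sub_add_cancel] at *
      exact this (Nat.div_lt_of_lt_mul hlt) (Nat.div_lt_of_lt_mul hlt')
    apply Fin.ext
    rw [← Nat.div_add_mod (m j).val (2 ^ k j), ← Nat.div_add_mod (m' j).val (2 ^ k j), a1, a2]
  have hdec : ∀ (j : Fin 5) (x : Fin n → Bool)
      (y : ∀ k : {k : Fin 5 // k ∈ cycA j}, Fin (msgCard n (R k.1))),
      ∃ d : Fin (msgCard n (R j)), ∀ m : (∀ j : Fin 5, Fin (msgCard n (R j))), ι (e0 m) = x →
        (fun k : {k : Fin 5 // k ∈ cycA j} => m k.1) = y → d = m j := by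
    intro j x y
    by_cases h : ∃ m : (∀ j : Fin 5, Fin (msgCard n (R j))), ι (e0 m) = x ∧
          (fun k : {k : Fin 5 // k ∈ cycA j} => m k.1) = y
    · obtain ⟨m, c1, c2⟩ := h
      refine ⟨m j, fun m' c1' c2' => ?_⟩
      have c2 := c2.trans c2'.symm
      exact key _ _ j (c1.trans c1'.symm) (congrFun c2 ⟨j - 1, by simp [cycA]⟩)
        (congrFun c2 ⟨j + 1, by simp [cycA]⟩)
    · exact ⟨⟨0, msgCard_pos n (R j)⟩, fun m c1 c2 => absurd ⟨m, c1, c2⟩ h⟩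
  choose dec hdec using hdec
  obtain ⟨C, hC1, hC2⟩ : ∃ C : IndexCode 5 cycA R n, C.enc = (fun m => ι (e0 m)) ∧ C.dec = dec :=
    ⟨⟨fun m => ι (e0 m), dec⟩, rfl, rfl⟩
  refine ⟨C, ?_⟩
  have hgood : ∀ m : (∀ j : Fin 5, Fin (msgCard n (R j))),
      ¬ ∃ j : Fin 5, C.dec j (C.enc m) (fun k => m k.1) ≠ m j := by
    rintro m ⟨j, hj⟩
    apply hj
    rw [hC1, hC2]
    exact hdec j _ _ m rfl rfl
  have : IsEmpty {m : ∀ j : Fin 5, Fin (msgCard n (R j)) //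
      ∃ j : Fin 5, C.dec j (C.enc m) (fun k => m k.1) ≠ m j} := ⟨fun m => hgood m.1 m.2⟩
  unfold IndexCode.Pe
  rw [Nat.card_of_isEmpty]
  simp

set_option maxHeartbeats 4000000 in
/-- Fractional edge covers of the weighted 5-cycle. -/
lemma lp_cover (R : Fin 5 → ℝ) (h0 : ∀ j, 0 ≤ R j) (h1 : ∀ j : Fin 5, R j + R (j + 2) ≤ 1)
    (h2 : R 0 + R 1 + R 2 + R 3 + R 4 ≤ 2) :
    ∃ w : Fin 5 → ℝ, (∀ j, 0 ≤ w j) ∧ ∑ j, w j ≤ 1 ∧ ∀ j, R j ≤ w j + w (j - 1) := by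
  have p0 := h0 0
  have p1 := h0 1
  have p2 := h0 2
  have p3 := h0 3
  have p4 := h0 4
  have q0 : R 0 + R 2 ≤ 1 := h1 0
  have q1 : R 1 + R 3 ≤ 1 := h1 1
  have q2 : R 2 + R 4 ≤ 1 := h1 2
  have q3 : R 3 + R 0 ≤ 1 := h1 3
  have q4 : R 4 + R 1 ≤ 1 := h1 4
  obtain ⟨t, ht⟩ : ∃ t, t = max 0 (R 0 + R 1 + R 3 - 1) := ⟨_, rfl⟩
  obtain ⟨w1, hw1⟩ : ∃ w, w = max 0 (R 1 - t) := ⟨_, rfl⟩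
  obtain ⟨w2, hw2⟩ : ∃ w, w = max 0 (R 2 - w1) := ⟨_, rfl⟩
  obtain ⟨w3, hw3⟩ : ∃ w, w = max 0 (R 3 - w2) := ⟨_, rfl⟩
  obtain ⟨v, hv⟩ : ∃ v, v = max 0 (R 0 - t) := ⟨_, rfl⟩
  obtain ⟨w4, hw4⟩ : ∃ w, w = max v (R 4 - w3) := ⟨_, rfl⟩
  have key : (0 ≤ t ∧ 0 ≤ w1 ∧ 0 ≤ w2 ∧ 0 ≤ w3 ∧ 0 ≤ w4) ∧ t + w1 + w2 + w3 + w4 ≤ 1 ∧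
      R 0 ≤ t + w4 ∧ R 1 ≤ w1 + t ∧ R 2 ≤ w2 + w1 ∧ R 3 ≤ w3 + w2 ∧ R 4 ≤ w4 + w3 := by
    rcases max_cases 0 (R 0 + R 1 + R 3 - 1) with ⟨e, f⟩ | ⟨e, f⟩ <;> rw [e] at ht <;>
    rcases max_cases 0 (R 1 - t) with ⟨e, f⟩ | ⟨e, f⟩ <;> rw [e] at hw1 <;>
    rcases max_cases 0 (R 2 - w1) with ⟨e, f⟩ | ⟨e, f⟩ <;> rw [e] at hw2 <;>
    rcases max_cases 0 (R 3 - w2) with ⟨e, f⟩ | ⟨e, f⟩ <;> rw [e] at hw3 <;>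
    rcases max_cases 0 (R 0 - t) with ⟨e, f⟩ | ⟨e, f⟩ <;> rw [e] at hv <;>
    rcases max_cases v (R 4 - w3) with ⟨e, f⟩ | ⟨e, f⟩ <;> rw [e] at hw4 <;>
    refine ⟨⟨?_, ?_, ?_, ?_, ?_⟩, ?_, ?_, ?_, ?_, ?_, ?_⟩ <;> linarith
  obtain ⟨⟨k0, k1, k2, k3, k4⟩, ks, c0, c1, c2, c3, c4⟩ := key
  refine ⟨![t, w1, w2, w3, w4], ?_, ?_, ?_⟩
  · intro j
    fin_cases j <;> assumption
  · rw [Fin.sum_univ_five]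
    exact ks
  · intro j
    fin_cases j <;> assumption

lemma achievable_of_cover (R w : Fin 5 → ℝ) (h0 : ∀ j, 0 ≤ R j) (hw : ∀ j, 0 ≤ w j)
    (hs : ∑ j, w j ≤ 1) (hR : ∀ j, R j ≤ w j + w (j - 1)) (c : ℝ) (hc0 : 0 ≤ c) (hc : c < 1) :
    IndexAchievable 5 cycA (c • R) := by
  refine ⟨fun j => mul_nonneg hc0 (h0 j), ?_⟩
  have hev : ∀ᶠ n : ℕ in atTop, ∃ C : IndexCode 5 cycA (c • R) n, C.Pe = 0 := by
    have hlarge : ∀ᶠ n : ℕ in atTop, ∀ j, R j = 0 ∨ 2 ≤ (n : ℝ) * ((1 - c) * R j) := by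
      rw [eventually_all]
      intro j
      rcases (h0 j).eq_or_lt with h | h
      · exact Eventually.of_forall fun _ => Or.inl h.symm
      · have h1 : Tendsto (fun n : ℕ => (n : ℝ) * ((1 - c) * R j)) atTop atTop :=
          tendsto_natCast_atTop_atTop.atTop_mul_const (mul_pos (by linarith) h)
        filter_upwards [h1.eventually_ge_atTop 2] with n hn
        exact Or.inr hn
    filter_upwards [hlarge] with n hn
    apply exists_code n (c • R) (fun j => ⌊(n : ℝ) * w j⌋₊)
    · have : ((∑ j, ⌊(n : ℝ) * w j⌋₊ : ℕ) : ℝ) ≤ n := by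
        push_cast
        calc _ ≤ ∑ j, (n : ℝ) * w j := Finset.sum_le_sum fun j _ =>
              Nat.floor_le (mul_nonneg (Nat.cast_nonneg _) (hw j))
          _ = n * ∑ j, w j := by rw [Finset.mul_sum]
          _ ≤ n * 1 := mul_le_mul_of_nonneg_left hs (Nat.cast_nonneg _)
          _ = n := mul_one _
      exact_mod_cast this
    · intro j
      rw [← pow_add]
      apply Nat.ceil_le.2
      push_cast
      rw [← Real.rpow_natCast]
      apply Real.rpow_le_rpow_of_exponent_le (by norm_num)
      push_cast
      simp only [Pi.smul_apply, smul_eq_mul]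
      rcases hn j with h | h
      · rw [h]
        simp only [mul_zero]
        positivity
      · have f1 := Nat.lt_floor_add_one ((n : ℝ) * w j)
        have f2 := Nat.lt_floor_add_one ((n : ℝ) * w (j - 1))
        have f3 := mul_le_mul_of_nonneg_left (hR j) (Nat.cast_nonneg (α := ℝ) n)
        nlinarith
  have hex : ∀ n, ∃ C : IndexCode 5 cycA (c • R) n,
      (∃ C : IndexCode 5 cycA (c • R) n, C.Pe = 0) → C.Pe = 0 := by
    intro n
    by_cases h : ∃ C : IndexCode 5 cycA (c • R) n, C.Pe = 0
    · obtain ⟨C, hC⟩ := h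
      exact ⟨C, fun _ => hC⟩
    · exact ⟨⟨fun _ _ => true, fun j _ _ => ⟨0, msgCard_pos _ _⟩⟩, fun h' => absurd h' h⟩
  choose C hC using hex
  refine ⟨C, tendsto_const_nhds.congr' ?_⟩
  filter_upwards [hev] with n hn
  exact (hC n hn).symm

/-- **Capacity region of the symmetric 5-message cyclic index coding problem**
`(1|5,2), (2|1,3), (3|2,4), (4|3,5), (5|4,1)` (Example 1, with messages indexed by `Fin 5`
and side information `A j = {j-1, j+1}` mod 5): the capacity region (closure of the set of
achievable rate tuples) equals the set of nonnegative tuples with `R j + R (j+2) ≤ 1` for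
all `j` (the five cycle inequalities) and `R 0 + R 1 + R 2 + R 3 + R 4 ≤ 2`. -/
theorem capacity_region_five_cycle :
    closure {R : Fin 5 → ℝ |
        IndexAchievable 5 (fun j => ({j - 1, j + 1} : Finset (Fin 5))) R} =
      {R : Fin 5 → ℝ | (∀ j, 0 ≤ R j) ∧
        (∀ j : Fin 5, R j + R (j + 2) ≤ 1) ∧
        R 0 + R 1 + R 2 + R 3 + R 4 ≤ 2} := by
  apply Set.Subset.antisymm
  · apply closure_minimal
    · intro R hR
      exact converse R hR
    · simp only [Set.ofPred_and, Set.ofPred_forall]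
      refine (isClosed_iInter fun j => isClosed_le ?_ ?_).inter
        ((isClosed_iInter fun j => isClosed_le ?_ ?_).inter (isClosed_le ?_ ?_)) <;> fun_prop
  · rintro R ⟨h0, h1, h2⟩
    obtain ⟨w, hw, hs, hR⟩ := lp_cover R h0 h1 h2
    have hlim : Tendsto (fun i : ℕ => (1 - 1 / ((i : ℝ) + 1)) • R) atTop (nhds R) := by
      have : Tendsto (fun i : ℕ => (1 - 1 / ((i : ℝ) + 1))) atTop (nhds (1 - 0)) :=
        tendsto_const_nhds.sub tendsto_one_div_add_atTop_nhds_zero_nat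
      simpa using this.smul_const R
    apply mem_closure_of_tendsto hlim
    refine Eventually.of_forall fun i => ?_
    apply achievable_of_cover R w h0 hw hs hR
    · have : 1 / ((i : ℝ) + 1) ≤ 1 := by
        rw [div_le_one (by positivity)]
        linarith [Nat.cast_nonneg (α := ℝ) i]
      linarith
    · have : 0 < 1 / ((i : ℝ) + 1) := by positivity
      linarith
end

section
/- Capacity region of the 4-message index coding problem (1|4), (2|3,4), (3|1,2), (4|2,3). Consider the index coding problem with 4 messages and side information sets A_1 = {4}, A_2 = {3,4}, A_3 = {1,2}, A_4 = {2,3}. Its capacity region is exactly the set of tuples (R_1,R_2,R_3,R_4) of nonnegative reals satisfying R_1 + R_2 ≤ 1, R_1 + R_3 ≤ 1, R_1 + R_4 ≤ 1, and R_3 + R_4 ≤ 1. -/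
open Finset Filter

lemma exists_decode {N : ℕ} {A : Fin N → Finset (Fin N)} {R : Fin N → ℝ} {n : ℕ}
    (enc : (∀ j : Fin N, Fin (msgCard n (R j))) → (Fin n → Bool))
    (h : ∀ m m', enc m = enc m' → ∀ j, (∀ k ∈ A j, m k = m' k) → m j = m' j) :
    ∃ C : IndexCode N A R n, C.Pe = 0 := by
  classical
  let dec : ∀ j : Fin N, (Fin n → Bool) →
    (∀ k : {k : Fin N // k ∈ A j}, Fin (msgCard n (R k.1))) → Fin (msgCard n (R j)) :=
    fun j x s => if hx : ∃ m : ∀ j : Fin N, Fin (msgCard n (R j)), enc m = x ∧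
         (fun k : {k : Fin N // k ∈ A j} => m k.1) = s
      then hx.choose j else ⟨0, msgCard_pos _ _⟩
  refine ⟨⟨enc, dec⟩, ?_⟩
  have : IsEmpty {m : ∀ j : Fin N, Fin (msgCard n (R j)) //
      ∃ j : Fin N, dec j (enc m) (fun k => m k.1) ≠ m j} := by
    refine ⟨fun ⟨m, j, hj⟩ => hj ?_⟩
    have hx : ∃ m' : ∀ j : Fin N, Fin (msgCard n (R j)), enc m' = enc m ∧
      (fun k : {k : Fin N // k ∈ A j} => m' k.1) =
        (fun k : {k : Fin N // k ∈ A j} => m k.1) := ⟨m, rfl, rfl⟩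
    have hd : dec j (enc m) (fun k => m k.1) = hx.choose j := dif_pos hx
    rw [hd]
    refine h _ _ hx.choose_spec.1 j fun k hk => ?_
    exact congrFun hx.choose_spec.2 ⟨k, hk⟩
  unfold IndexCode.Pe
  rw [@Nat.card_of_isEmpty _ this]
  simp

lemma exists_group (k : ℕ) :
    ∃ (G : Type) (_ : AddCommGroup G) (_ : Fintype G), Fintype.card G = 2 ^ k :=
  ⟨Fin k → ZMod 2, inferInstance, inferInstance, by simp [ZMod.card]⟩

lemma exists_code_s7 {R : Fin 4 → ℝ} {n a b c d : ℕ}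
    (h0 : msgCard n (R 0) ≤ 2 ^ (a + d)) (h1 : msgCard n (R 1) ≤ 2 ^ (b + c + d))
    (h2 : msgCard n (R 2) ≤ 2 ^ (b + d)) (h3 : msgCard n (R 3) ≤ 2 ^ (c + d))
    (hn : a + b + c + 2 * d ≤ n) :
    ∃ C : IndexCode 4 (![({3} : Finset (Fin 4)), {2, 3}, {0, 1}, {1, 2}]) R n, C.Pe = 0 := by
  classical
  obtain ⟨A, _, _, hA⟩ := exists_group a
  obtain ⟨B, _, _, hB⟩ := exists_group b
  obtain ⟨C, _, _, hC⟩ := exists_group c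
  obtain ⟨D, _, _, hD⟩ := exists_group d
  obtain ⟨e0⟩ : Nonempty (Fin (msgCard n (R 0)) ↪ A × D) :=
    Function.Embedding.nonempty_of_card_le (by simpa [hA, hB, hC, hD, pow_add] using h0)
  obtain ⟨e1⟩ : Nonempty (Fin (msgCard n (R 1)) ↪
      (B × C) × D) :=
    Function.Embedding.nonempty_of_card_le (by simpa [hA, hB, hC, hD, pow_add] using h1)
  obtain ⟨e2⟩ : Nonempty (Fin (msgCard n (R 2)) ↪ B × D) :=
    Function.Embedding.nonempty_of_card_le (by simpa [hA, hB, hC, hD, pow_add] using h2)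
  obtain ⟨e3⟩ : Nonempty (Fin (msgCard n (R 3)) ↪ C × D) :=
    Function.Embedding.nonempty_of_card_le (by simpa [hA, hB, hC, hD, pow_add] using h3)
  obtain ⟨f⟩ : Nonempty ((A × B × C × D ×
      D) ↪ (Fin n → Bool)) := by
    refine Function.Embedding.nonempty_of_card_le ?_
    simp only [Fintype.card_prod, hA, hB, hC, hD, ← pow_add, Fintype.card_fun, Fintype.card_bool,
      Fintype.card_fin]
    exact Nat.pow_le_pow_right (by norm_num) (by omega)
  refine exists_decode (fun m => f ((e0 (m 0)).1, (e1 (m 1)).1.1 + (e2 (m 2)).1,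
    (e1 (m 1)).1.2 + (e3 (m 3)).1, (e0 (m 0)).2 + (e3 (m 3)).2,
    (e1 (m 1)).2 + (e2 (m 2)).2 + (e3 (m 3)).2)) ?_
  intro m m' he j
  have he := f.injective he
  simp only [Prod.mk.injEq] at he
  obtain ⟨x1, x2, x3, x4, x5⟩ := he
  fin_cases j
  · intro hk
    have k3 : m 3 = m' 3 := hk 3 (by simp)
    rw [k3] at x4
    exact e0.injective (Prod.ext x1 (add_right_cancel x4))
  · intro hk
    have k2 : m 2 = m' 2 := hk 2 (by simp)
    have k3 : m 3 = m' 3 := hk 3 (by simp)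
    rw [k2] at x2 x5
    rw [k3] at x3 x5
    exact e1.injective (Prod.ext (Prod.ext (add_right_cancel x2) (add_right_cancel x3))
      (add_right_cancel (add_right_cancel x5)))
  · intro hk
    have k0 : m 0 = m' 0 := hk 0 (by simp)
    have k1 : m 1 = m' 1 := hk 1 (by simp)
    rw [k0] at x4
    rw [k1] at x2 x5
    rw [add_left_cancel x4] at x5
    exact e2.injective (Prod.ext (add_left_cancel x2) (add_left_cancel (add_right_cancel x5)))
  · intro hk
    have k1 : m 1 = m' 1 := hk 1 (by simp)
    have k2 : m 2 = m' 2 := hk 2 (by simp)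
    rw [k1] at x3 x5
    rw [k2] at x5
    exact e3.injective (Prod.ext (add_left_cancel x3) (add_left_cancel x5))

lemma msgCard_le {n k : ℕ} {R : ℝ} (h : n * R ≤ k) : msgCard n R ≤ 2 ^ k := by
  refine Nat.ceil_le.mpr ?_
  push_cast
  rw [← Real.rpow_natCast]
  exact Real.rpow_le_rpow_of_exponent_le (by norm_num) h

lemma achievable_of_slack {R : Fin 4 → ℝ} (hR : ∀ j, 0 ≤ R j) {α β γ δ : ℝ}
    (hα : 0 ≤ α) (hβ : 0 ≤ β) (hγ : 0 ≤ γ) (hδ : 0 ≤ δ)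
    (h0 : R 0 ≤ α + δ) (h1 : R 1 ≤ β + γ + δ) (h2 : R 2 ≤ β + δ) (h3 : R 3 ≤ γ + δ)
    (hs : α + β + γ + 2 * δ < 1) :
    IndexAchievable 4 (![({3} : Finset (Fin 4)), {2, 3}, {0, 1}, {1, 2}]) R := by
  refine ⟨hR, ?_⟩
  have key : ∀ n : ℕ, 5 / (1 - (α + β + γ + 2 * δ)) ≤ n →
      ∃ C : IndexCode 4 (![({3} : Finset (Fin 4)), {2, 3}, {0, 1}, {1, 2}]) R n, C.Pe = 0 := by
    intro n hn
    rw [div_le_iff₀ (by linarith)] at hn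
    have n0 : (0 : ℝ) ≤ n := Nat.cast_nonneg n
    have la := Nat.le_ceil (n * α)
    have lb := Nat.le_ceil (n * β)
    have lc := Nat.le_ceil (n * γ)
    have ld := Nat.le_ceil (n * δ)
    have ua := Nat.ceil_lt_add_one (mul_nonneg n0 hα)
    have ub := Nat.ceil_lt_add_one (mul_nonneg n0 hβ)
    have uc := Nat.ceil_lt_add_one (mul_nonneg n0 hγ)
    have ud := Nat.ceil_lt_add_one (mul_nonneg n0 hδ)
    have g0 := mul_le_mul_of_nonneg_left h0 n0
    have g1 := mul_le_mul_of_nonneg_left h1 n0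
    have g2 := mul_le_mul_of_nonneg_left h2 n0
    have g3 := mul_le_mul_of_nonneg_left h3 n0
    refine exists_code_s7 (a := ⌈n * α⌉₊) (b := ⌈n * β⌉₊) (c := ⌈n * γ⌉₊) (d := ⌈n * δ⌉₊)
      (msgCard_le ?_) (msgCard_le ?_) (msgCard_le ?_) (msgCard_le ?_) ?_
    · push_cast; linarith
    · push_cast; linarith
    · push_cast; linarith
    · push_cast; linarith
    · have : ((⌈n * α⌉₊ + ⌈n * β⌉₊ + ⌈n * γ⌉₊ + 2 * ⌈n * δ⌉₊ : ℕ) : ℝ) ≤ (n : ℝ) := by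
        push_cast; linarith
      exact_mod_cast this
  have key2 : ∀ n : ℕ, ∃ C : IndexCode 4
      (![({3} : Finset (Fin 4)), {2, 3}, {0, 1}, {1, 2}]) R n,
      5 / (1 - (α + β + γ + 2 * δ)) ≤ n → C.Pe = 0 := by
    intro n
    by_cases hn : 5 / (1 - (α + β + γ + 2 * δ)) ≤ n
    · obtain ⟨C, hC⟩ := key n hn
      exact ⟨C, fun _ => hC⟩
    · exact ⟨⟨fun _ _ => true, fun _ _ _ => ⟨0, msgCard_pos _ _⟩⟩, fun h => absurd h hn⟩
  choose C hC using key2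
  refine ⟨C, tendsto_const_nhds.congr' ?_⟩
  filter_upwards [tendsto_natCast_atTop_atTop.eventually_ge_atTop
    (5 / (1 - (α + β + γ + 2 * δ)))] with n hn
  exact (hC n hn).symm

lemma decompose {r q s t : ℝ} (hr : 0 ≤ r) (hs : 0 ≤ s)
    (h1 : r + q ≤ 1) (h2 : r + s ≤ 1) (h3 : r + t ≤ 1) (h4 : s + t ≤ 1) :
    ∃ α β γ δ : ℝ, 0 ≤ α ∧ 0 ≤ β ∧ 0 ≤ γ ∧ 0 ≤ δ ∧ r ≤ α + δ ∧ q ≤ β + γ + δ ∧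
      s ≤ β + δ ∧ t ≤ γ + δ ∧ α + β + γ + 2 * δ ≤ 1 := by
  by_cases h : 1 - r ≤ s + t
  · refine ⟨1 - s - t, 1 - r - t, 1 - r - s, s + t - (1 - r), ?_⟩
    refine ⟨?_, ?_, ?_, ?_, ?_, ?_, ?_, ?_, ?_⟩ <;> linarith
  · refine ⟨r, s, 1 - r - s, 0, ?_⟩
    refine ⟨?_, ?_, ?_, ?_, ?_, ?_, ?_, ?_, ?_⟩ <;> linarith

/-- Counting converse: receiver `i` decodes without `j`, receiver `j` then decodes. -/
lemma converse_s7 {N : ℕ} {A : Fin N → Finset (Fin N)} {R : Fin N → ℝ} {n : ℕ}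
    (C : IndexCode N A R n) (i j : Fin N) (hij : i ≠ j) (hi : j ∉ A i) (hii : i ∉ A i)
    (hjj : j ∉ A j) :
    1 - C.Pe ≤ (2 : ℝ) ^ ((n : ℝ) * (1 - (R i + R j))) := by
  classical
  let M := ∀ k : Fin N, Fin (msgCard n (R k))
  let bad : M → Prop := fun m => ∃ j : Fin N, C.dec j (C.enc m) (fun k => m k.1) ≠ m j
  let O := ∀ k : {k : Fin N // k ≠ i ∧ k ≠ j}, Fin (msgCard n (R k.1))
  let φ : {m : M // ¬ bad m} → (Fin n → Bool) × O := fun m => (C.enc m.1, fun k => m.1 k.1)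
  have hφ : Function.Injective φ := by
    rintro ⟨m, hm⟩ ⟨m', hm'⟩ h
    simp only [φ, Prod.mk.injEq] at h
    obtain ⟨hx, ho⟩ := h
    simp only [bad, not_exists, not_not] at hm hm'
    have ho' : ∀ k, k ≠ i → k ≠ j → m k = m' k := fun k h1 h2 => congrFun ho ⟨k, h1, h2⟩
    have dec : ∀ l, (∀ k ∈ A l, m k = m' k) → m l = m' l := by
      intro l hl
      rw [← hm l, ← hm' l, hx]
      congr 1
      funext k
      exact hl k.1 k.2
    have ei : m i = m' i := dec i fun k hk =>
      ho' k (fun e => hii (e ▸ hk)) (fun e => hi (e ▸ hk))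
    have ej : m j = m' j := dec j fun k hk => by
      by_cases e : k = i
      · rw [e, ei]
      · exact ho' k e (fun e => hjj (e ▸ hk))
    refine Subtype.ext (funext fun k => ?_)
    by_cases e : k = i
    · subst e; exact ei
    by_cases e' : k = j
    · subst e'; exact ej
    exact ho' k e e'
  have c1 := Fintype.card_le_of_injective φ hφ
  have cO : Fintype.card M = msgCard n (R i) * msgCard n (R j) * Fintype.card O := by
    simp only [M, O, Fintype.card_pi, Fintype.card_fin]
    rw [← Finset.mul_prod_erase univ _ (mem_univ i),
      ← Finset.mul_prod_erase (univ.erase i) _ (mem_erase.mpr ⟨hij.symm, mem_univ j⟩), mul_assoc]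
    congr 2
    apply Finset.prod_subtype (f := fun k => msgCard n (R k))
    intro k
    simp [and_comm]
  have c2 := Fintype.card_subtype_compl bad
  have c3 := Fintype.card_subtype_le bad
  have hMpos : 0 < Fintype.card M := by
    simp only [M, Fintype.card_pi, Fintype.card_fin]
    exact Finset.prod_pos fun k _ => msgCard_pos _ _
  have hOpos : 0 < Fintype.card O := by
    simp only [O, Fintype.card_pi, Fintype.card_fin]
    exact Finset.prod_pos fun k _ => msgCard_pos _ _
  have hPe : C.Pe = (Fintype.card {m // bad m} : ℝ) / Fintype.card M := by
    rw [← Nat.card_eq_fintype_card, ← Nat.card_eq_fintype_card]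
    rfl
  have c4 : Fintype.card M ≤ 2 ^ n * Fintype.card O + Fintype.card {m // bad m} := by
    simp only [Fintype.card_prod, Fintype.card_fun, Fintype.card_bool, Fintype.card_fin] at c1
    omega
  have c4' : (Fintype.card M : ℝ) ≤ 2 ^ n * Fintype.card O + Fintype.card {m // bad m} := by
    exact_mod_cast c4
  have hMp : (0 : ℝ) < Fintype.card M := by exact_mod_cast hMpos
  have hOp : (0 : ℝ) < Fintype.card O := by exact_mod_cast hOpos
  have s1 : 1 - C.Pe ≤ 2 ^ n * Fintype.card O / Fintype.card M := by
    rw [hPe, le_div_iff₀ hMp, sub_mul, div_mul_cancel₀ _ hMp.ne']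
    linarith
  refine s1.trans ?_
  rw [div_le_iff₀ hMp, cO]
  push_cast
  have gi : (2 : ℝ) ^ ((n : ℝ) * R i) ≤ msgCard n (R i) := Nat.le_ceil _
  have gj : (2 : ℝ) ^ ((n : ℝ) * R j) ≤ msgCard n (R j) := Nat.le_ceil _
  have e : (2 : ℝ) ^ n = (2 : ℝ) ^ ((n : ℝ) * (1 - (R i + R j))) *
      ((2 : ℝ) ^ ((n : ℝ) * R i) * (2 : ℝ) ^ ((n : ℝ) * R j)) := by
    rw [← Real.rpow_add two_pos, ← Real.rpow_add two_pos, ← Real.rpow_natCast]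
    congr 1
    ring
  rw [e, mul_assoc]
  gcongr

lemma converse_achievable {N : ℕ} {A : Fin N → Finset (Fin N)} {R : Fin N → ℝ}
    (h : IndexAchievable N A R) (i j : Fin N) (hij : i ≠ j) (hi : j ∉ A i) (hii : i ∉ A i)
    (hjj : j ∉ A j) : R i + R j ≤ 1 := by
  obtain ⟨-, C, hC⟩ := h
  by_contra! hlt
  have t1 : Tendsto (fun n : ℕ => (2 : ℝ) ^ ((n : ℝ) * (1 - (R i + R j)))) atTop (nhds 0) := by
    have hb : (2 : ℝ) ^ (1 - (R i + R j)) < 1 :=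
      Real.rpow_lt_one_of_one_lt_of_neg (by norm_num) (by linarith)
    refine (tendsto_pow_atTop_nhds_zero_of_lt_one (by positivity) hb).congr fun n => ?_
    rw [← Real.rpow_natCast, ← Real.rpow_mul (by norm_num), mul_comm]
  have := le_of_tendsto_of_tendsto' (tendsto_const_nhds.sub hC) t1
    (fun n => converse_s7 (C n) i j hij hi hii hjj)
  norm_num at this

/-- **Capacity region of the 4-message index coding problem** `(1|4), (2|3,4), (3|1,2),
(4|2,3)` (Example 2, with messages 1,2,3,4 indexed by `0,1,2,3 : Fin 4`): the capacity
region equals the set of nonnegative rate tuples satisfying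
`R₁+R₂ ≤ 1`, `R₁+R₃ ≤ 1`, `R₁+R₄ ≤ 1`, `R₃+R₄ ≤ 1`. -/
theorem capacity_region_four_message_example :
    closure {R : Fin 4 → ℝ |
        IndexAchievable 4
          (![({3} : Finset (Fin 4)), {2, 3}, {0, 1}, {1, 2}]) R} =
      {R : Fin 4 → ℝ | (∀ j, 0 ≤ R j) ∧
        R 0 + R 1 ≤ 1 ∧ R 0 + R 2 ≤ 1 ∧ R 0 + R 3 ≤ 1 ∧ R 2 + R 3 ≤ 1} := by
  apply Set.Subset.antisymm
  · apply closure_minimal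
    · intro R hR
      refine ⟨hR.1, converse_achievable hR 0 1 ?_ ?_ ?_ ?_, converse_achievable hR 0 2 ?_ ?_ ?_ ?_,
        ?_, converse_achievable hR 2 3 ?_ ?_ ?_ ?_⟩
      case refine_9 =>
        rw [add_comm]
        exact converse_achievable hR 3 0 (by decide) (by decide) (by decide) (by decide)
      all_goals decide
    · have c : ∀ j : Fin 4, Continuous fun R : Fin 4 → ℝ => R j := fun j => continuous_apply j
      simp only [Set.ofPred_and, Set.ofPred_forall]
      refine IsClosed.inter (isClosed_iInter fun j => isClosed_le continuous_const (c j)) ?_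
      exact ((isClosed_le ((c 0).add (c 1)) continuous_const).inter
        ((isClosed_le ((c 0).add (c 2)) continuous_const).inter
        ((isClosed_le ((c 0).add (c 3)) continuous_const).inter
        (isClosed_le ((c 2).add (c 3)) continuous_const))))
  · rintro R ⟨hR, h1, h2, h3, h4⟩
    obtain ⟨α, β, γ, δ, hα, hβ, hγ, hδ, g0, g1, g2, g3, gs⟩ :=
      decompose (hR 0) (hR 2) h1 h2 h3 h4
    have t : Tendsto (fun k : ℕ => (1 - 1 / ((k : ℝ) + 1)) • R) atTop (nhds R) := by
      have := (tendsto_const_nhds (x := (1 : ℝ))).sub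
        (tendsto_one_div_add_atTop_nhds_zero_nat (𝕜 := ℝ))
      simpa using this.smul_const R
    refine mem_closure_of_tendsto t (Eventually.of_forall fun k => ?_)
    have e1 : (0 : ℝ) < 1 / ((k : ℝ) + 1) := by positivity
    have e2 : 1 / ((k : ℝ) + 1) ≤ 1 := by
      rw [div_le_one (by positivity)]
      linarith [(Nat.cast_nonneg k : (0 : ℝ) ≤ k)]
    generalize 1 / ((k : ℝ) + 1) = ε at e1 e2
    have e3 : 0 ≤ 1 - ε := by linarith
    refine achievable_of_slack (α := (1 - ε) * α) (β := (1 - ε) * β) (γ := (1 - ε) * γ)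
      (δ := (1 - ε) * δ) (fun j => mul_nonneg e3 (hR j)) (by positivity) (by positivity)
      (by positivity) (by positivity) ?_ ?_ ?_ ?_ ?_
    · have := mul_le_mul_of_nonneg_left g0 e3
      simp only [Pi.smul_apply, smul_eq_mul]; linarith
    · have := mul_le_mul_of_nonneg_left g1 e3
      simp only [Pi.smul_apply, smul_eq_mul]; linarith
    · have := mul_le_mul_of_nonneg_left g2 e3
      simp only [Pi.smul_apply, smul_eq_mul]; linarith
    · have := mul_le_mul_of_nonneg_left g3 e3
      simp only [Pi.smul_apply, smul_eq_mul]; linarith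
    · have := mul_le_mul_of_nonneg_left gs e3
      linarith
end

section
/- Capacity region of the symmetric 6-message index coding problem with U = 1, D = 2. Consider the index coding problem with 6 messages and side information sets A_j = {j−1, j+1, j+2} (indices modulo 6), i.e., (1|2,3,6), (2|1,3,4), (3|2,4,5), (4|3,5,6), (5|4,6,1), (6|5,1,2). Its capacity region is exactly the set of tuples (R_1,...,R_6) of nonnegative reals satisfying, for every j ∈ {1,...,6} (indices modulo 6): R_j + R_{j+2} ≤ 1, R_j + R_{j+3} ≤ 1, and R_j + R_{j+1} + R_{j+2} + R_{j+3} + R_{j+4} ≤ 2. -/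
open Finset Filter

section Entropy
open Classical

/-- size of the fibre of `f` through `w` -/
noncomputable def fibN {Ω α : Type} [Fintype Ω] (f : Ω → α) (w : Ω) : ℕ :=
  (Finset.univ.filter (fun v => f v = f w)).card

/-- entropy of `f` under the uniform distribution, times the cardinality of `Ω` -/
noncomputable def ent {Ω α : Type} [Fintype Ω] (f : Ω → α) : ℝ :=
  ∑ w : Ω, (Real.log (Fintype.card Ω) - Real.log (fibN f w))

lemma fibN_pos {Ω α : Type} [Fintype Ω] (f : Ω → α) (w : Ω) : 0 < fibN f w :=
  Finset.card_pos.mpr ⟨w, by simp⟩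

lemma fibN_congr {Ω α : Type} [Fintype Ω] (f : Ω → α) {v w : Ω} (h : f v = f w) :
    fibN f v = fibN f w := by
  unfold fibN; rw [h]

lemma ent_submod {Ω α β γ δ : Type} [Fintype Ω] (f : Ω → α) (g : Ω → β) (h : Ω → γ) (k : Ω → δ)
    (hf : ∀ v w, f v = f w → h v = h w) (hg : ∀ v w, g v = g w → h v = h w)
    (hk : ∀ v w, k v = k w ↔ (f v = f w ∧ g v = g w)) :
    ent k + ent h ≤ ent f + ent g := by
  have key : ∑ w : Ω, ((fibN f w : ℝ) * fibN g w / (fibN k w * fibN h w)) ≤ ∑ w : Ω, (1:ℝ) := by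
    have e1 : ∀ w : Ω, ((fibN f w : ℝ) * fibN g w / (fibN k w * fibN h w)) =
        ∑ a : Ω, ∑ b : Ω, if f a = f w ∧ g b = g w then
          (1 / ((fibN k w : ℝ) * fibN h w)) else 0 := by
      intro w
      have : ∀ a b : Ω, (if f a = f w ∧ g b = g w then
          (1 / ((fibN k w : ℝ) * fibN h w)) else 0) =
          (if f a = f w then (1:ℝ) else 0) * (if g b = g w then (1:ℝ) else 0) *
            (1 / ((fibN k w : ℝ) * fibN h w)) := by
        intro a b; by_cases h1 : f a = f w <;> by_cases h2 : g b = g w <;> simp [h1, h2]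
      simp_rw [this, ← Finset.sum_mul, ← Finset.mul_sum, ← Finset.sum_mul]
      simp only [Finset.sum_boole]
      unfold fibN
      ring
    simp_rw [e1]
    rw [Finset.sum_comm]
    apply Finset.sum_le_sum
    intro a _
    rw [Finset.sum_comm]
    -- for fixed a, b the inner sum
    have e2 : ∀ b : Ω, (∑ w : Ω, if f a = f w ∧ g b = g w then
          (1 / ((fibN k w : ℝ) * fibN h w)) else 0) ≤
          if h b = h a then 1 / (fibN h a : ℝ) else 0 := by
      intro b
      by_cases hex : ∃ w0, f a = f w0 ∧ g b = g w0
      · obtain ⟨w0, ha, hb⟩ := hex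
        have h1 : h a = h w0 := hf _ _ ha
        have h2 : h b = h w0 := hg _ _ hb
        rw [if_pos (h2.trans h1.symm), ← Finset.sum_filter]
        have e3 : (Finset.univ.filter fun w => f a = f w ∧ g b = g w) =
            Finset.univ.filter fun w => k w = k w0 := by
          ext w
          simp only [Finset.mem_filter, Finset.mem_univ, true_and, hk, ha, hb]
          exact ⟨fun h => ⟨h.1.symm, h.2.symm⟩, fun h => ⟨h.1.symm, h.2.symm⟩⟩
        rw [e3]
        have e4 : ∀ w ∈ Finset.univ.filter (fun w => k w = k w0),
            (1 / ((fibN k w : ℝ) * fibN h w)) = 1 / ((fibN k w0 : ℝ) * fibN h a) := by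
          intro w hw
          simp only [Finset.mem_filter, Finset.mem_univ, true_and] at hw
          rw [fibN_congr k hw, fibN_congr h (hf _ _ ((hk _ _).1 hw).1), fibN_congr h h1]
        rw [Finset.sum_congr rfl e4, Finset.sum_const, nsmul_eq_mul]
        have p1 : (0:ℝ) < fibN k w0 := by exact_mod_cast fibN_pos k w0
        have p2 : (0:ℝ) < fibN h a := by exact_mod_cast fibN_pos h a
        change (fibN k w0 : ℝ) * _ ≤ _
        apply le_of_eq
        field_simp
      · push Not at hex
        rw [Finset.sum_eq_zero]
        · split_ifs <;> positivity
        · intro w _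
          rw [if_neg]
          rintro ⟨x, y⟩
          exact hex w x y
    refine (Finset.sum_le_sum fun b _ => e2 b).trans ?_
    rw [← Finset.sum_filter, Finset.sum_const, nsmul_eq_mul]
    have p2 : (0:ℝ) < fibN h a := by exact_mod_cast fibN_pos h a
    change (fibN h a : ℝ) * _ ≤ _
    apply le_of_eq
    field_simp
  have pt : ∀ w : Ω, Real.log (fibN f w) + Real.log (fibN g w) - Real.log (fibN k w)
      - Real.log (fibN h w) ≤ (fibN f w : ℝ) * fibN g w / (fibN k w * fibN h w) - 1 := by
    intro w
    have p1 : (0:ℝ) < fibN f w := by exact_mod_cast fibN_pos f w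
    have p2 : (0:ℝ) < fibN g w := by exact_mod_cast fibN_pos g w
    have p3 : (0:ℝ) < fibN k w := by exact_mod_cast fibN_pos k w
    have p4 : (0:ℝ) < fibN h w := by exact_mod_cast fibN_pos h w
    have := Real.log_le_sub_one_of_pos
      (show 0 < (fibN f w : ℝ) * fibN g w / (fibN k w * fibN h w) by positivity)
    rw [Real.log_div (by positivity) (by positivity), Real.log_mul p1.ne' p2.ne',
      Real.log_mul p3.ne' p4.ne'] at this
    linarith
  have tot := Finset.sum_le_sum (fun w (_ : w ∈ (Finset.univ : Finset Ω)) => pt w)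
  simp only [Finset.sum_sub_distrib, Finset.sum_add_distrib] at tot
  unfold ent
  simp only [Finset.sum_sub_distrib]
  simp only [Finset.sum_const, nsmul_eq_mul] at *
  linarith

lemma ent_le_card {Ω α : Type} [Fintype Ω] [Fintype α] (f : Ω → α) :
    ent f ≤ Fintype.card Ω * Real.log (Fintype.card α) := by
  rcases isEmpty_or_nonempty Ω with hΩ | ⟨⟨w0⟩⟩
  · simp [ent]
  have hc : (0:ℝ) < Fintype.card Ω := by
    exact_mod_cast Fintype.card_pos_iff.mpr ⟨w0⟩
  have hK : (0:ℝ) < Fintype.card α := by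
    exact_mod_cast Fintype.card_pos_iff.mpr ⟨f w0⟩
  have pt : ∀ w : Ω, Real.log (Fintype.card Ω) - Real.log (fibN f w) - Real.log (Fintype.card α)
      ≤ (Fintype.card Ω : ℝ) / (fibN f w * Fintype.card α) - 1 := by
    intro w
    have p1 : (0:ℝ) < fibN f w := by exact_mod_cast fibN_pos f w
    have := Real.log_le_sub_one_of_pos
      (show 0 < (Fintype.card Ω : ℝ) / (fibN f w * Fintype.card α) by positivity)
    rw [Real.log_div (by positivity) (by positivity), Real.log_mul p1.ne' hK.ne'] at this
    linarith
  have cnt : ∑ w : Ω, (1 / (fibN f w : ℝ)) ≤ Fintype.card α := by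
    rw [← Finset.sum_fiberwise (s := Finset.univ) (g := f)]
    have : ∀ a : α, ∑ w ∈ Finset.univ.filter (fun w => f w = a), (1 / (fibN f w : ℝ)) ≤ 1 := by
      intro a
      by_cases hex : ∃ w0, f w0 = a
      · obtain ⟨w0, rfl⟩ := hex
        have e4 : ∀ w ∈ Finset.univ.filter (fun w => f w = f w0),
            (1 / (fibN f w : ℝ)) = 1 / (fibN f w0 : ℝ) := by
          intro w hw
          simp only [Finset.mem_filter, Finset.mem_univ, true_and] at hw
          rw [fibN_congr f hw]
        rw [Finset.sum_congr rfl e4, Finset.sum_const, nsmul_eq_mul]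
        have p2 : (0:ℝ) < fibN f w0 := by exact_mod_cast fibN_pos f w0
        change (fibN f w0 : ℝ) * _ ≤ _
        apply le_of_eq
        field_simp
      · push Not at hex
        rw [Finset.filter_false_of_mem (fun w _ => hex w)]
        simp
    refine (Finset.sum_le_sum fun a _ => this a).trans ?_
    simp
  have tot := Finset.sum_le_sum (fun w (_ : w ∈ (Finset.univ : Finset Ω)) => pt w)
  have e : ∑ w : Ω, ((Fintype.card Ω : ℝ) / (fibN f w * Fintype.card α)) =
      (Fintype.card Ω : ℝ) / Fintype.card α * ∑ w : Ω, (1 / (fibN f w : ℝ)) := by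
    rw [Finset.mul_sum]
    refine Finset.sum_congr rfl fun w _ => ?_
    have p1 : (0:ℝ) < fibN f w := by exact_mod_cast fibN_pos f w
    field_simp
  rw [Finset.sum_sub_distrib, Finset.sum_sub_distrib, Finset.sum_sub_distrib, e] at tot
  have : (Fintype.card Ω : ℝ) / Fintype.card α * ∑ w : Ω, (1 / (fibN f w : ℝ)) ≤
      Fintype.card Ω := by
    calc _ ≤ (Fintype.card Ω : ℝ) / Fintype.card α * Fintype.card α := by gcongr
      _ = _ := by field_simp
  unfold ent
  rw [Finset.sum_sub_distrib]
  simp only [Finset.sum_const, Finset.card_univ, nsmul_eq_mul, mul_one] at *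
  linarith

lemma ent_injective {Ω α : Type} [Fintype Ω] (f : Ω → α) (hf : Function.Injective f) :
    ent f = Fintype.card Ω * Real.log (Fintype.card Ω) := by
  have : ∀ w, fibN f w = 1 := by
    intro w
    unfold fibN
    rw [Finset.card_eq_one]
    exact ⟨w, by ext v; simp [hf.eq_iff]⟩
  simp [ent, this]

lemma ent_const {Ω : Type} [Fintype Ω] : ent (fun _ : Ω => ()) = 0 := by
  simp [ent, fibN]

lemma ent_congr {Ω α β : Type} [Fintype Ω] (f : Ω → α) (g : Ω → β)
    (h : ∀ v w, f v = f w ↔ g v = g w) : ent f = ent g := by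
  have : ∀ w, fibN f w = fibN g w := by
    intro w; unfold fibN; simp only [h]
  simp [ent, this]

end Entropy

section Converse

lemma rot_add (j : Fin 6) : j + 3 - 1 = j + 2 ∧ j + 3 + 1 = j + 4 ∧ j + 3 + 2 = j + 5 ∧
    j + 4 - 1 = j + 3 ∧ j + 4 + 1 = j + 5 ∧ j + 4 + 2 = j ∧ j + 1 - 1 = j ∧ j + 1 + 1 = j + 2 ∧
    j + 1 + 2 = j + 3 ∧ j + 2 + 2 = j + 4 ∧ j + 2 + 1 = j + 3 ∧ j + 2 - 1 = j + 1 ∧ j - 1 = j + 5 := by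
  revert j; decide

lemma rot_cases (j k : Fin 6) : k = j ∨ k = j + 1 ∨ k = j + 2 ∨ k = j + 3 ∨ k = j + 4 ∨ k = j + 5 := by
  revert j k; decide

lemma span_pairA (P : Fin 6 → Prop) (hd : ∀ j, P (j-1) → P (j+1) → P (j+2) → P j) (j : Fin 6)
    (h1 : P (j+1)) (h3 : P (j+3)) (h4 : P (j+4)) (h5 : P (j+5)) : ∀ k, P k := by
  obtain ⟨r1, r2, r3, r4, r5, r6, r7, r8, r9, r10, r11, r12, r13⟩ := rot_add j
  have h2 : P (j+2) := hd (j+2) (by rwa [r12]) (by rwa [r11]) (by rwa [r10])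
  have h0 : P j := hd j (by rwa [r13]) h1 h2
  intro k
  rcases rot_cases j k with h | h | h | h | h | h <;> rw [h] <;> assumption

lemma span_pairB (P : Fin 6 → Prop) (hd : ∀ j, P (j-1) → P (j+1) → P (j+2) → P j) (j : Fin 6)
    (h1 : P (j+1)) (h2 : P (j+2)) (h4 : P (j+4)) (h5 : P (j+5)) : ∀ k, P k := by
  obtain ⟨r1, r2, r3, r4, r5, r6, r7, r8, r9, r10, r11, r12, r13⟩ := rot_add j
  have h3 : P (j+3) := hd (j+3) (by rwa [r1]) (by rwa [r2]) (by rwa [r3])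
  have h0 : P j := hd j (by rwa [r13]) h1 h2
  intro k
  rcases rot_cases j k with h | h | h | h | h | h <;> rw [h] <;> assumption

lemma rot_sum (j : Fin 6) (f : Fin 6 → ℝ) :
    ∑ k, f k = f j + f (j+1) + f (j+2) + f (j+3) + f (j+4) + f (j+5) := by
  rw [← Equiv.sum_comp (Equiv.addLeft j) f, Fin.sum_univ_six]
  simp

/-- the transmitted word together with the messages in `S` -/
def view {Ω : Type} {n : ℕ} {M : Fin 6 → ℕ} (x : Ω → (Fin n → Bool)) (m : Ω → ∀ k, Fin (M k))
    (S : Finset (Fin 6)) (w : Ω) : (Fin n → Bool) × (∀ k : {k // k ∈ S}, Fin (M k.1)) :=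
  (x w, fun k => m w k.1)

lemma view_eq_iff {Ω : Type} {n : ℕ} {M : Fin 6 → ℕ} (x : Ω → (Fin n → Bool))
    (m : Ω → ∀ k, Fin (M k)) (S : Finset (Fin 6)) (v w : Ω) :
    view x m S v = view x m S w ↔ x v = x w ∧ ∀ k ∈ S, m v k = m w k := by
  simp [view, Prod.ext_iff, funext_iff]

lemma ent_view_le {Ω : Type} [Fintype Ω] {n : ℕ} {M : Fin 6 → ℕ} (hM : ∀ k, 0 < M k)
    (x : Ω → (Fin n → Bool))
    (m : Ω → ∀ k, Fin (M k)) (S : Finset (Fin 6)) :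
    ent (view x m S) ≤ Fintype.card Ω * (n * Real.log 2 + ∑ k ∈ S, Real.log (M k)) := by
  refine (ent_le_card _).trans (le_of_eq ?_)
  congr 1
  rw [Fintype.card_prod, Fintype.card_pi, Fintype.card_pi]
  simp only [Fintype.card_bool, Fintype.card_fin, Finset.prod_const, Finset.card_univ]
  rw [Finset.prod_coe_sort S (fun k => M k)]
  push_cast
  have : ∀ k, (M k : ℝ) ≠ 0 := fun k => by exact_mod_cast (hM k).ne'
  rw [Real.log_mul (by positivity) (Finset.prod_ne_zero_iff.mpr fun k _ => this k), Real.log_pow,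
    Real.log_prod (fun k _ => this k)]

lemma converse_core {Ω : Type} [Fintype Ω] [Nonempty Ω] {n : ℕ} {M : Fin 6 → ℕ} (hM : ∀ k, 0 < M k)
    (x : Ω → (Fin n → Bool)) (m : Ω → ∀ k, Fin (M k)) (hm : Function.Injective m)
    (hd : ∀ j v w, x v = x w → m v (j-1) = m w (j-1) → m v (j+1) = m w (j+1) →
      m v (j+2) = m w (j+2) → m v j = m w j) (j : Fin 6) :
    (Real.log (Fintype.card Ω) ≤ n * Real.log 2 +
      (∑ k, Real.log (M k) - Real.log (M j) - Real.log (M (j+2)))) ∧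
    (Real.log (Fintype.card Ω) ≤ n * Real.log 2 +
      (∑ k, Real.log (M k) - Real.log (M j) - Real.log (M (j+3)))) ∧
    (2 * Real.log (Fintype.card Ω) ≤ 2 * (n * Real.log 2) +
      (∑ k, Real.log (M k) + Real.log (M (j+5)))) := by
  have hc : (0:ℝ) < Fintype.card Ω := by exact_mod_cast Fintype.card_pos
  obtain ⟨r1, r2, r3, r4, r5, r6, r7, r8, r9, r10, r11, r12, r13⟩ := rot_add j
  rw [rot_sum j]
  have spA : ∀ v w, x v = x w → m v (j+1) = m w (j+1) → m v (j+3) = m w (j+3) →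
      m v (j+4) = m w (j+4) → m v (j+5) = m w (j+5) → v = w := fun v w hx h1 h3 h4 h5 =>
    hm (funext (span_pairA (fun k => m v k = m w k) (fun i => hd i v w hx) j h1 h3 h4 h5))
  have spB : ∀ v w, x v = x w → m v (j+1) = m w (j+1) → m v (j+2) = m w (j+2) →
      m v (j+4) = m w (j+4) → m v (j+5) = m w (j+5) → v = w := fun v w hx h1 h3 h4 h5 =>
    hm (funext (span_pairB (fun k => m v k = m w k) (fun i => hd i v w hx) j h1 h3 h4 h5))
  have ne1 : ∀ (f : Fin 6 → ℝ), ∑ k ∈ ({j+1, j+3, j+4, j+5} : Finset (Fin 6)), f k =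
      f (j+1) + f (j+3) + f (j+4) + f (j+5) := by
    intro f
    rw [Finset.sum_insert (by clear * -; revert j; decide), Finset.sum_insert (by clear * -; revert j; decide),
      Finset.sum_insert (by clear * -; revert j; decide), Finset.sum_singleton]; ring
  have ne2 : ∀ (f : Fin 6 → ℝ), ∑ k ∈ ({j+1, j+2, j+4, j+5} : Finset (Fin 6)), f k =
      f (j+1) + f (j+2) + f (j+4) + f (j+5) := by
    intro f
    rw [Finset.sum_insert (by clear * -; revert j; decide), Finset.sum_insert (by clear * -; revert j; decide),
      Finset.sum_insert (by clear * -; revert j; decide), Finset.sum_singleton]; ring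
  have ne3 : ∀ (f : Fin 6 → ℝ), ∑ k ∈ ({j+2, j+4, j+5} : Finset (Fin 6)), f k =
      f (j+2) + f (j+4) + f (j+5) := by
    intro f
    rw [Finset.sum_insert (by clear * -; revert j; decide), Finset.sum_insert (by clear * -; revert j; decide),
      Finset.sum_singleton]; ring
  have ne4 : ∀ (f : Fin 6 → ℝ), ∑ k ∈ ({j, j+3, j+5} : Finset (Fin 6)), f k =
      f j + f (j+3) + f (j+5) := by
    intro f
    rw [Finset.sum_insert (by clear * -; revert j; decide), Finset.sum_insert (by clear * -; revert j; decide),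
      Finset.sum_singleton]; ring
  refine ⟨?_, ?_, ?_⟩
  · have h1 := ent_view_le hM x m {j+1, j+3, j+4, j+5}
    rw [ent_injective] at h1
    · rw [ne1] at h1
      have := le_of_mul_le_mul_left h1 hc
      linarith
    · intro v w h
      rw [view_eq_iff] at h
      simp only [Finset.mem_insert, Finset.mem_singleton, forall_eq_or_imp, forall_eq] at h
      exact spA v w h.1 h.2.1 h.2.2.1 h.2.2.2.1 h.2.2.2.2
  · have h1 := ent_view_le hM x m {j+1, j+2, j+4, j+5}
    rw [ent_injective] at h1
    · rw [ne2] at h1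
      have := le_of_mul_le_mul_left h1 hc
      linarith
    · intro v w h
      rw [view_eq_iff] at h
      simp only [Finset.mem_insert, Finset.mem_singleton, forall_eq_or_imp, forall_eq] at h
      exact spB v w h.1 h.2.1 h.2.2.1 h.2.2.2.1 h.2.2.2.2
  · -- the five-message bound
    have h1 := ent_view_le hM x m {j+2, j+4, j+5}
    have h2 := ent_view_le hM x m {j, j+3, j+5}
    have s1 := ent_submod (view x m {j+2, j+4, j+5}) (view x m {j, j+3, j+5})
      (view x m {j+3, j+4, j+5}) (m)
      (by
        intro v w h
        rw [view_eq_iff] at h ⊢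
        simp only [Finset.mem_insert, Finset.mem_singleton, forall_eq_or_imp, forall_eq] at h ⊢
        have := hd (j+3) v w h.1
        rw [r1, r2, r3] at this
        tauto)
      (by
        intro v w h
        rw [view_eq_iff] at h ⊢
        simp only [Finset.mem_insert, Finset.mem_singleton, forall_eq_or_imp, forall_eq] at h ⊢
        have := hd (j+4) v w h.1
        rw [r4, r5, r6] at this
        tauto)
      (by
        intro v w
        rw [view_eq_iff, view_eq_iff]
        simp only [Finset.mem_insert, Finset.mem_singleton, forall_eq_or_imp, forall_eq]
        constructor
        · intro h
          have : v = w := hm h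
          subst this
          simp
        · rintro ⟨⟨hx, p2, p4, p5⟩, ⟨-, p0, p3, -⟩⟩
          have h1 := hd (j+1) v w hx
          rw [r7, r8, r9] at h1
          rw [spB v w hx (h1 p0 p2 p3) p2 p4 p5])
    have s2 := ent_submod (view x m {j+3, j+4, j+5}) (fun w => m w (j+1)) (fun _ => ()) m
      (by simp) (by simp)
      (by
        intro v w
        rw [view_eq_iff]
        simp only [Finset.mem_insert, Finset.mem_singleton, forall_eq_or_imp, forall_eq]
        constructor
        · intro h
          have : v = w := hm h
          subst this
          simp
        · rintro ⟨⟨hx, p3, p4, p5⟩, p1⟩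
          rw [spA v w hx p1 p3 p4 p5])
    have h3 := ent_le_card (fun w => m w (j+1))
    rw [ent_const] at s2
    rw [ent_injective m hm] at s1 s2
    rw [ne3] at h1
    rw [ne4] at h2
    rw [Fintype.card_fin] at h3
    refine le_of_mul_le_mul_left ?_ hc
    linarith

lemma le_log_msgCard (n : ℕ) (R : ℝ) : n * R * Real.log 2 ≤ Real.log (msgCard n R) := by
  rw [← Real.log_rpow (by norm_num)]
  exact Real.log_le_log (by positivity) (Nat.le_ceil _)

lemma limit_aux (s c : ℝ) (h : ∀ᶠ n : ℕ in atTop, (n : ℝ) * s ≤ n * c + 2) : s ≤ c := by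
  by_contra hlt
  push Not at hlt
  have ht : Tendsto (fun n : ℕ => (n : ℝ) * (s - c)) atTop atTop :=
    tendsto_natCast_atTop_atTop.atTop_mul_const (by linarith)
  obtain ⟨n, h1, h2⟩ := (h.and (ht.eventually_gt_atTop 2)).exists
  nlinarith

lemma converse_fin (n : ℕ) (M : Fin 6 → ℕ) (hM : ∀ k, 0 < M k)
    (enc : (∀ k, Fin (M k)) → (Fin n → Bool))
    (Bad : (∀ k, Fin (M k)) → Prop)
    (hd : ∀ v w, ¬ Bad v → ¬ Bad w → enc v = enc w → ∀ j, v (j-1) = w (j-1) →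
      v (j+1) = w (j+1) → v (j+2) = w (j+2) → v j = w j)
    (hn : (Nat.card {m // Bad m} : ℝ) / (Nat.card (∀ k, Fin (M k)) : ℝ) < 1 / 2) (j : Fin 6) :
    (Real.log (M j) + Real.log (M (j+2)) ≤ n * Real.log 2 + Real.log 2) ∧
    (Real.log (M j) + Real.log (M (j+3)) ≤ n * Real.log 2 + Real.log 2) ∧
    (Real.log (M j) + Real.log (M (j+1)) + Real.log (M (j+2)) + Real.log (M (j+3)) +
      Real.log (M (j+4)) ≤ 2 * (n * Real.log 2) + 2 * Real.log 2) := by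
  classical
  rw [Nat.card_eq_fintype_card, Nat.card_eq_fintype_card] at hn
  have hT : (Fintype.card (∀ k, Fin (M k)) : ℝ) = ∏ k, (M k : ℝ) := by
    rw [Fintype.card_pi]; simp
  have hTpos : (0:ℝ) < ∏ k, (M k : ℝ) := Finset.prod_pos fun k _ => Nat.cast_pos.mpr (hM k)
  have hsplit : (Fintype.card {m // ¬ Bad m} : ℝ) = (Fintype.card (∀ k, Fin (M k)) : ℝ) -
      Fintype.card {m // Bad m} := by
    have h2 := Fintype.card_subtype_le Bad
    rw [Fintype.card_subtype_compl Bad, Nat.cast_sub h2]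
  have hbig : (∏ k, (M k : ℝ)) / 2 ≤ Fintype.card {m // ¬ Bad m} := by
    rw [hT, div_lt_iff₀ hTpos] at hn
    rw [hsplit, hT]
    linarith
  have hpos : (0:ℝ) < Fintype.card {m // ¬ Bad m} := lt_of_lt_of_le (by positivity) hbig
  have : Nonempty {m // ¬ Bad m} := Fintype.card_pos_iff.mp (Nat.cast_pos.mp hpos)
  have hlog : ∑ k, Real.log (M k) - Real.log 2 ≤ Real.log (Fintype.card {m // ¬ Bad m}) := by
    have hne : ∀ k ∈ (Finset.univ : Finset (Fin 6)), (M k : ℝ) ≠ 0 :=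
      fun k _ => Nat.cast_ne_zero.mpr (hM k).ne'
    rw [← Real.log_prod hne, ← Real.log_div hTpos.ne' two_ne_zero]
    exact Real.log_le_log (by positivity) hbig
  obtain ⟨c1, c2, c3⟩ := converse_core (Ω := {m // ¬ Bad m}) (n := n) (M := M) hM
    (fun w => enc w.1) (fun w => w.1) Subtype.val_injective
    (fun i v w hx => hd v.1 w.1 v.2 w.2 hx i) j
  rw [rot_sum j] at hlog c3 c1 c2
  refine ⟨?_, ?_, ?_⟩ <;> linarith

lemma converse_bound (R : Fin 6 → ℝ)
    (h : IndexAchievable 6 (fun j => ({j - 1, j + 1, j + 2} : Finset (Fin 6))) R) (j : Fin 6) :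
    R j + R (j + 2) ≤ 1 ∧ R j + R (j + 3) ≤ 1 ∧
      R j + R (j + 1) + R (j + 2) + R (j + 3) + R (j + 4) ≤ 2 := by
  obtain ⟨-, C, hC⟩ := h
  have ev : ∀ᶠ n in atTop, (C n).Pe < 1/2 := hC.eventually (gt_mem_nhds (by norm_num))
  have main : ∀ᶠ n : ℕ in atTop, ((n : ℝ) * (R j + R (j+2)) ≤ n * 1 + 2) ∧
      ((n : ℝ) * (R j + R (j+3)) ≤ n * 1 + 2) ∧
      ((n : ℝ) * (R j + R (j + 1) + R (j + 2) + R (j + 3) + R (j + 4)) ≤ n * 2 + 2) := by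
    filter_upwards [ev] with n hn
    obtain ⟨c1, c2, c3⟩ := converse_fin n (fun k => msgCard n (R k)) (fun k => msgCard_pos _ _)
      (C n).enc (fun m => ∃ j, (C n).dec j ((C n).enc m) (fun k => m k.1) ≠ m j)
      (by
        intro v w hv hw hx i h1 h2 h3
        simp only [not_exists, not_not] at hv hw
        rw [← hv i, ← hw i, hx]
        congr 1
        funext ⟨k, hk⟩
        simp only [Finset.mem_insert, Finset.mem_singleton] at hk
        rcases hk with rfl | rfl | rfl <;> assumption) hn j
    have L : ∀ k, n * R k * Real.log 2 ≤ Real.log (msgCard n (R k)) :=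
      fun k => le_log_msgCard n (R k)
    have l2 : 0 < Real.log 2 := Real.log_pos (by norm_num)
    have L0 := L j
    have L1 := L (j+1)
    have L2 := L (j+2)
    have L3 := L (j+3)
    have L4 := L (j+4)
    refine ⟨?_, ?_, ?_⟩ <;> refine le_of_mul_le_mul_right ?_ l2 <;> linarith
  refine ⟨limit_aux _ _ (main.mono fun n h => h.1), limit_aux _ _ (main.mono fun n h => h.2.1),
    limit_aux _ _ (main.mono fun n h => h.2.2)⟩

end Converse

section Achievability

lemma greedy_coloring {T K : Type} [DecidableEq T] [Fintype K] [Nonempty K] (W : Finset T)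
    (adj : T → T → Prop) [DecidableRel adj] (hsymm : ∀ s t, adj s t → adj t s)
    (hdeg : ∀ t ∈ W, (W.filter (fun s => adj t s)).card < Fintype.card K) :
    ∃ h : T → K, ∀ s ∈ W, ∀ t ∈ W, s ≠ t → adj s t → h s ≠ h t := by
  classical
  suffices H : ∀ V : Finset T, V ⊆ W →
      ∃ h : T → K, ∀ s ∈ V, ∀ t ∈ V, s ≠ t → adj s t → h s ≠ h t from H W subset_rfl
  intro V
  induction V using Finset.induction_on with
  | empty =>
    intro _
    exact ⟨fun _ => Classical.arbitrary K, by simp⟩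
  | insert t V ht ih =>
    intro hsub
    obtain ⟨h, hh⟩ := ih (fun x hx => hsub (Finset.mem_insert_of_mem hx))
    have htW : t ∈ W := hsub (Finset.mem_insert_self _ _)
    have hlt : ((W.filter (fun s => adj t s)).image h).card < Fintype.card K :=
      lt_of_le_of_lt Finset.card_image_le (hdeg t htW)
    obtain ⟨c, hc⟩ : ∃ c, c ∉ (W.filter (fun s => adj t s)).image h := by
      by_contra hcon
      push Not at hcon
      rw [Finset.eq_univ_iff_forall.mpr hcon, Finset.card_univ] at hlt
      exact lt_irrefl _ hlt
    have hc' : ∀ s ∈ V, adj t s → h s ≠ c := by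
      intro s hs hadj heq
      exact hc (Finset.mem_image.mpr ⟨s, Finset.mem_filter.mpr
        ⟨hsub (Finset.mem_insert_of_mem hs), hadj⟩, heq⟩)
    refine ⟨Function.update h t c, ?_⟩
    intro x hx y hy hxy hadj
    rw [Finset.mem_insert] at hx hy
    rcases hx with rfl | hx <;> rcases hy with rfl | hy
    · exact absurd rfl hxy
    · rw [Function.update_self, Function.update_of_ne hxy.symm]
      exact (hc' y hy hadj).symm
    · rw [Function.update_self, Function.update_of_ne hxy]
      exact hc' x hx (hsymm _ _ hadj)
    · rw [Function.update_of_ne (ne_of_mem_of_not_mem hx ht),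
        Function.update_of_ne (ne_of_mem_of_not_mem hy ht)]
      exact hh x hx y hy hxy hadj

/-- agreement of two composite vectors on what receiver `j` can compute -/
def agreeAt (j : Fin 6) (s t : Fin 6 → ℕ × ℕ) : Prop :=
  (s (j+1)).1 = (t (j+1)).1 ∧ ∀ i, (i = j+1 ∨ i = j+2 ∨ i = j-1) → (s i).2 = (t i).2

lemma mod_cancel {a u v w : ℕ} (hv : v < a) (hw : w < a) (h : (u + v) % a = (u + w) % a) :
    v = w := by
  have h1 : u + v ≡ u + w [MOD a] := h
  have h2 : v ≡ w [MOD a] := Nat.ModEq.add_left_cancel' u h1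
  exact Nat.ModEq.eq_of_lt_of_lt h2 hv hw

lemma embed_triple (M p q r : ℕ) (h : M ≤ p * q * r) :
    ∃ f : Fin M → ℕ × ℕ × ℕ, Function.Injective f ∧
      ∀ m, (f m).1 < p ∧ (f m).2.1 < q ∧ (f m).2.2 < r := by
  obtain ⟨g⟩ : Nonempty (Fin M ↪ Fin p × Fin q × Fin r) := by
    apply Function.Embedding.nonempty_of_card_le
    simpa [mul_assoc] using h
  refine ⟨fun m => ((g m).1.1, (g m).2.1.1, (g m).2.2.1), ?_, fun m =>
    ⟨(g m).1.2, (g m).2.1.2, (g m).2.2.2⟩⟩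
  intro x y hxy
  simp only [Prod.mk.injEq] at hxy
  apply g.injective
  exact Prod.ext (Fin.ext hxy.1) (Prod.ext (Fin.ext hxy.2.1) (Fin.ext hxy.2.2))

lemma ach_core (n : ℕ) (M a b : Fin 6 → ℕ) (ha : ∀ i, 0 < a i)
    (hM : ∀ j, M j ≤ a (j-1) * b j * a j)
    (hdeg : ∑ j : Fin 6, ∏ i : Fin 6, ((if i = j+1 then 1 else a i) *
      (if i = j+1 ∨ i = j+2 ∨ i = j-1 then 1 else b i)) < 2 ^ n) :
    ∃ enc : (∀ j, Fin (M j)) → (Fin n → Bool), ∀ j m m', enc m = enc m' →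
      m (j-1) = m' (j-1) → m (j+1) = m' (j+1) → m (j+2) = m' (j+2) → m j = m' j := by
  classical
  choose φ hφi hφb using fun j => embed_triple (M j) (a (j-1)) (b j) (a j) (hM j)
  let comp : (∀ j, Fin (M j)) → (Fin 6 → ℕ × ℕ) := fun m i =>
    (((φ i (m i)).2.2 + (φ (i+1) (m (i+1))).1) % a i, (φ i (m i)).2.1)
  let W : Finset (Fin 6 → ℕ × ℕ) :=
    Fintype.piFinset (fun i => Finset.range (a i) ×ˢ Finset.range (b i))
  have hW : ∀ m, comp m ∈ W := by
    intro m
    simp only [W, Fintype.mem_piFinset, Finset.mem_product, Finset.mem_range, comp]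
    exact fun i => ⟨Nat.mod_lt _ (ha i), (hφb i (m i)).2.1⟩
  obtain ⟨h, hh⟩ := greedy_coloring (K := Fin n → Bool) W (fun s t => ∃ j, agreeAt j s t)
    (by
      rintro s t ⟨j, h1, h2⟩
      exact ⟨j, h1.symm, fun i hi => (h2 i hi).symm⟩)
    (by
      intro t ht
      simp only [Fintype.card_pi, Fintype.card_bool, Finset.prod_const, Finset.card_univ,
        Fintype.card_fin]
      refine lt_of_le_of_lt ?_ hdeg
      let S : Fin 6 → Finset (Fin 6 → ℕ × ℕ) := fun j => Fintype.piFinset (fun i =>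
        (if i = j+1 then {(t i).1} else Finset.range (a i)) ×ˢ
        (if i = j+1 ∨ i = j+2 ∨ i = j-1 then {(t i).2} else Finset.range (b i)))
      have hsub : W.filter (fun s => ∃ j, agreeAt j t s) ⊆ Finset.univ.biUnion S := by
        intro s hs
        rw [Finset.mem_filter] at hs
        obtain ⟨hsW, j, h1, h2⟩ := hs
        rw [Finset.mem_biUnion]
        refine ⟨j, Finset.mem_univ _, ?_⟩
        simp only [W, Fintype.mem_piFinset, Finset.mem_product] at hsW
        simp only [S, Fintype.mem_piFinset, Finset.mem_product]
        intro i
        constructor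
        · split_ifs with hi
          · subst hi; simp [h1]
          · exact (hsW i).1
        · split_ifs with hi
          · simp [h2 i hi]
          · exact (hsW i).2
      refine (Finset.card_le_card hsub).trans (Finset.card_biUnion_le.trans (le_of_eq ?_))
      refine Finset.sum_congr rfl fun j _ => ?_
      simp only [S, Fintype.card_piFinset, Finset.card_product]
      refine Finset.prod_congr rfl fun i _ => ?_
      congr 1 <;> split_ifs <;> simp)
  refine ⟨fun m => h (comp m), ?_⟩
  intro j m m' he h1 h2 h3
  obtain ⟨r1, r2, r3, r4, r5, r6, r7, r8, r9, r10, r11, r12, r13⟩ := rot_add j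
  have hr : j - 1 + 1 = j := by clear * -; revert j; decide
  have hcomp : comp m = comp m' := by
    by_contra hne
    refine hh _ (hW m) _ (hW m') hne ⟨j, ?_, ?_⟩ he
    · simp only [comp]
      have : m (j+1+1) = m' (j+1+1) := by rw [r8]; exact h3
      rw [h2, this]
    · rintro i (rfl | rfl | rfl)
      · simp only [comp]; rw [h2]
      · simp only [comp]; rw [h3]
      · simp only [comp]; rw [h1]
  have c1 := congrFun hcomp j
  have c2 := congrArg Prod.fst (congrFun hcomp (j-1))
  simp only [comp, Prod.mk.injEq] at c1 c2
  rw [h1, hr] at c2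
  rw [h2, add_comm, add_comm (φ j (m' j)).2.2] at c1
  have e1 := mod_cancel (hφb j (m j)).1 (hφb j (m' j)).1 c2
  have e2 := mod_cancel (hφb j (m j)).2.2 (hφb j (m' j)).2.2 c1.1
  exact hφi j (Prod.ext e1 (Prod.ext c1.2 e2))

lemma code_of_enc (n : ℕ) (R : Fin 6 → ℝ)
    (enc : (∀ j, Fin (msgCard n (R j))) → (Fin n → Bool))
    (henc : ∀ j m m', enc m = enc m' →
      m (j-1) = m' (j-1) → m (j+1) = m' (j+1) → m (j+2) = m' (j+2) → m j = m' j) :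
    ∃ C : IndexCode 6 (fun j => ({j - 1, j + 1, j + 2} : Finset (Fin 6))) R n, C.Pe = 0 := by
  classical
  refine ⟨⟨enc, fun j x side => if h : ∃ m, enc m = x ∧
    (fun k : {k // k ∈ ({j - 1, j + 1, j + 2} : Finset (Fin 6))} => m k.1) = side then
      h.choose j else ⟨0, msgCard_pos _ _⟩⟩, ?_⟩
  unfold IndexCode.Pe
  rw [div_eq_zero_iff]
  left
  rw [Nat.cast_eq_zero, Nat.card_eq_zero]
  left
  constructor
  rintro ⟨m, j, hne⟩
  apply hne
  have hex : ∃ m', enc m' = enc m ∧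
    (fun k : {k // k ∈ ({j - 1, j + 1, j + 2} : Finset (Fin 6))} => m' k.1) =
      (fun k : {k // k ∈ ({j - 1, j + 1, j + 2} : Finset (Fin 6))} => m k.1) := ⟨m, rfl, rfl⟩
  simp only
  rw [dif_pos hex]
  obtain ⟨s1, s2⟩ := hex.choose_spec
  exact henc j _ _ s1 (congrFun s2 ⟨j-1, by simp⟩) (congrFun s2 ⟨j+1, by simp⟩)
    (congrFun s2 ⟨j+2, by simp⟩)

lemma msgCard_le_s11 (n : ℕ) {e : ℝ} (he : 0 ≤ e) :
    (msgCard n e : ℝ) ≤ 2 * (2:ℝ) ^ ((n:ℝ) * e) := by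
  have h1 : (1:ℝ) ≤ (2:ℝ) ^ ((n:ℝ) * e) := Real.one_le_rpow (by norm_num) (by positivity)
  have := Nat.ceil_lt_add_one (show (0:ℝ) ≤ (2:ℝ) ^ ((n:ℝ) * e) by positivity)
  unfold msgCard
  linarith

lemma ite_msg_le (n : ℕ) {e : ℝ} (he : 0 ≤ e) (p : Prop) [Decidable p] :
    (((if p then 1 else msgCard n e : ℕ)) : ℝ) ≤ 2 * (2:ℝ) ^ ((n:ℝ) * (if p then 0 else e)) := by
  split_ifs
  · norm_num
  · exact msgCard_le_s11 n he

lemma ach_point (R e : Fin 6 → ℝ) (c : ℝ) (hc : c < 1) (he : ∀ i, 0 ≤ e i)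
    (hR : ∀ j, 0 ≤ R j)
    (h1 : ∀ j, e (j-1) + e j ≤ R j)
    (h2 : ∀ j, R j + R (j+3) + R (j+4) - e (j+3) ≤ c) :
    IndexAchievable 6 (fun j => ({j - 1, j + 1, j + 2} : Finset (Fin 6))) R := by
  classical
  refine ⟨hR, ?_⟩
  let f : Fin 6 → ℝ := fun j => R j - e (j-1) - e j
  have hf : ∀ j, 0 ≤ f j := fun j => by simp only [f]; linarith [h1 j]
  have key : ∀ᶠ n : ℕ in atTop,
      ∃ C : IndexCode 6 (fun j => ({j - 1, j + 1, j + 2} : Finset (Fin 6))) R n, C.Pe = 0 := by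
    have ht : Tendsto (fun n : ℕ => (n : ℝ) * (1 - c)) atTop atTop :=
      tendsto_natCast_atTop_atTop.atTop_mul_const (by linarith)
    filter_upwards [ht.eventually_gt_atTop 15] with n hn
    obtain ⟨enc, henc⟩ := ach_core n (fun j => msgCard n (R j)) (fun i => msgCard n (e i))
      (fun i => msgCard n (f i)) (fun i => msgCard_pos _ _)
      (by
        intro j
        unfold msgCard
        rw [Nat.ceil_le]
        push_cast
        calc (2:ℝ) ^ ((n:ℝ) * R j) = (2:ℝ) ^ ((n:ℝ) * e (j-1)) * (2:ℝ) ^ ((n:ℝ) * f j) *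
              (2:ℝ) ^ ((n:ℝ) * e j) := by
              rw [← Real.rpow_add (by norm_num), ← Real.rpow_add (by norm_num)]
              congr 1
              simp only [f]; ring
          _ ≤ _ := by gcongr <;> exact Nat.le_ceil _)
      (by
        have hj : ∀ j : Fin 6, ((∏ i : Fin 6, ((if i = j+1 then 1 else msgCard n (e i)) *
            (if i = j+1 ∨ i = j+2 ∨ i = j-1 then 1 else msgCard n (f i))) : ℕ) : ℝ) ≤
            (2:ℝ)^(12:ℝ) * (2:ℝ) ^ ((n:ℝ) * c) := by
          intro j
          rw [Nat.cast_prod]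
          have step : ∀ i ∈ (Finset.univ : Finset (Fin 6)),
              (((if i = j+1 then 1 else msgCard n (e i)) *
              (if i = j+1 ∨ i = j+2 ∨ i = j-1 then 1 else msgCard n (f i)) : ℕ) : ℝ) ≤
              (2:ℝ) ^ ((2:ℝ) + n * ((if i = j+1 then 0 else e i) +
                (if i = j+1 ∨ i = j+2 ∨ i = j-1 then 0 else f i))) := by
            intro i _
            rw [Nat.cast_mul]
            have hx := ite_msg_le n (he i) (i = j+1)
            have hy := ite_msg_le n (hf i) (i = j+1 ∨ i = j+2 ∨ i = j-1)
            refine (mul_le_mul hx hy (Nat.cast_nonneg _) (by positivity)).trans (le_of_eq ?_)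
            rw [mul_add, Real.rpow_add (by norm_num), Real.rpow_add (by norm_num)]
            norm_num
            ring
          refine (Finset.prod_le_prod (fun i _ => Nat.cast_nonneg _) step).trans ?_
          rw [← Real.rpow_sum_of_pos (by norm_num), ← Real.rpow_add (by norm_num)]
          apply Real.rpow_le_rpow_of_exponent_le (by norm_num)
          rw [Finset.sum_add_distrib, ← Finset.mul_sum]
          have hs : ∑ i : Fin 6, ((if i = j+1 then 0 else e i) +
                (if i = j+1 ∨ i = j+2 ∨ i = j-1 then 0 else f i)) ≤ c := by
            refine le_trans (le_of_eq ?_) (h2 j)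
            simp only [f, Fin.sum_univ_six]
            have q : (-1 : Fin 6) = 5 := by decide
            fin_cases j <;> simp [Fin.ext_iff, q] <;> ring
          have : (n:ℝ) * ∑ i : Fin 6, ((if i = j+1 then 0 else e i) +
                (if i = j+1 ∨ i = j+2 ∨ i = j-1 then 0 else f i)) ≤ n * c :=
            mul_le_mul_of_nonneg_left hs (Nat.cast_nonneg _)
          have h12 : ∑ i : Fin 6, (2:ℝ) = 12 := by norm_num
          rw [h12]
          linarith
        rw [← Nat.cast_lt (α := ℝ), Nat.cast_sum]
        refine lt_of_le_of_lt (Finset.sum_le_sum fun j _ => hj j) ?_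
        rw [Finset.sum_const, Finset.card_univ, Fintype.card_fin, nsmul_eq_mul]
        push_cast
        calc (6:ℝ) * ((2:ℝ)^(12:ℝ) * (2:ℝ) ^ ((n:ℝ) * c))
            ≤ (2:ℝ)^(3:ℝ) * ((2:ℝ)^(12:ℝ) * (2:ℝ) ^ ((n:ℝ) * c)) := by
              gcongr; norm_num
          _ = (2:ℝ) ^ (15 + (n:ℝ) * c) := by
              rw [← Real.rpow_add (by norm_num), ← Real.rpow_add (by norm_num)]
              congr 1; ring
          _ < (2:ℝ) ^ (n:ℝ) := by
              apply Real.rpow_lt_rpow_of_exponent_lt (by norm_num)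
              linarith
          _ = _ := by rw [Real.rpow_natCast])
    exact code_of_enc n R enc henc
  have all : ∀ n : ℕ, ∃ C : IndexCode 6 (fun j => ({j - 1, j + 1, j + 2} : Finset (Fin 6))) R n,
      (∃ C' : IndexCode 6 (fun j => ({j - 1, j + 1, j + 2} : Finset (Fin 6))) R n, C'.Pe = 0) →
        C.Pe = 0 := by
    intro n
    by_cases h : ∃ C' : IndexCode 6 (fun j => ({j - 1, j + 1, j + 2} : Finset (Fin 6))) R n, C'.Pe = 0
    · exact ⟨h.choose, fun _ => h.choose_spec⟩
    · exact ⟨⟨fun _ _ => true, fun j _ _ => ⟨0, msgCard_pos _ _⟩⟩, fun h' => absurd h' h⟩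
  choose C hC using all
  refine ⟨C, ?_⟩
  apply tendsto_const_nhds.congr'
  filter_upwards [key] with n hn
  exact (hC n hn).symm

lemma ach_closure (R : Fin 6 → ℝ) (hR : ∀ j, 0 ≤ R j)
    (h : ∀ j : Fin 6, R j + R (j + 2) ≤ 1 ∧ R j + R (j + 3) ≤ 1 ∧
          R j + R (j + 1) + R (j + 2) + R (j + 3) + R (j + 4) ≤ 2) :
    R ∈ closure {R : Fin 6 → ℝ |
        IndexAchievable 6 (fun j => ({j - 1, j + 1, j + 2} : Finset (Fin 6))) R} := by
  let e : Fin 6 → ℝ := fun i => max 0 (R i + R (i+1) + R (i+3) - 1)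
  have he : ∀ i, 0 ≤ e i := fun i => le_max_left _ _
  have h1 : ∀ j, e (j-1) + e j ≤ R j := by
    intro j
    obtain ⟨g1, g2, g3⟩ := h (j-1)
    obtain ⟨k1, k2, k3⟩ := h (j+1)
    have q1 : j - 1 + 1 = j := by clear * -; revert j; decide
    have q2 : j - 1 + 2 = j + 1 := by clear * -; revert j; decide
    have q3 : j - 1 + 3 = j + 2 := by clear * -; revert j; decide
    have q4 : j - 1 + 4 = j + 3 := by clear * -; revert j; decide
    have q5 : j + 1 + 2 = j + 3 := by clear * -; revert j; decide
    rw [q1, q2, q3, q4] at g3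
    rw [q3] at g2
    rw [q5] at k1
    simp only [e]
    rw [q1, q3]
    have := hR j
    rcases max_cases (0:ℝ) (R (j-1) + R j + R (j+2) - 1) with ⟨m1, _⟩ | ⟨m1, _⟩ <;>
    rcases max_cases (0:ℝ) (R j + R (j+1) + R (j+3) - 1) with ⟨m2, _⟩ | ⟨m2, _⟩ <;>
    rw [m1, m2] <;> linarith
  have h2 : ∀ j, R j + R (j+3) + R (j+4) - e (j+3) ≤ 1 := by
    intro j
    have q1 : j + 3 + 1 = j + 4 := by clear * -; revert j; decide
    have q2 : j + 3 + 3 = j := by clear * -; revert j; decide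
    have : R (j+3) + R (j+3+1) + R (j+3+3) - 1 ≤ e (j+3) := le_max_right _ _
    rw [q1, q2] at this
    linarith
  have hu : Tendsto (fun k : ℕ => (1 - 1 / ((k:ℝ) + 1)) • R) atTop (nhds R) := by
    have h0 : Tendsto (fun k : ℕ => (1 - 1 / ((k:ℝ) + 1))) atTop (nhds (1 - 0)) :=
      tendsto_const_nhds.sub tendsto_one_div_add_atTop_nhds_zero_nat
    have := h0.smul_const R
    simpa using this
  refine mem_closure_of_tendsto hu (Eventually.of_forall fun k => ?_)
  have hk : 0 < 1 / ((k:ℝ) + 1) := by positivity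
  have hk1 : 1 / ((k:ℝ) + 1) ≤ 1 := by
    rw [div_le_one (by positivity)]
    linarith [(Nat.cast_nonneg k : (0:ℝ) ≤ k)]
  set t := 1 - 1 / ((k:ℝ) + 1) with ht
  have ht0 : 0 ≤ t := by linarith
  refine ach_point (t • R) (t • e) t (by linarith) ?_ ?_ ?_ ?_
  · intro i; exact mul_nonneg ht0 (he i)
  · intro i; exact mul_nonneg ht0 (hR i)
  · intro j
    simp only [Pi.smul_apply, smul_eq_mul]
    have := mul_le_mul_of_nonneg_left (h1 j) ht0
    linarith
  · intro j
    simp only [Pi.smul_apply, smul_eq_mul]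
    have := mul_le_mul_of_nonneg_left (h2 j) ht0
    linarith

end Achievability

/-- **Capacity region of the symmetric 6-message index coding problem with U = 1, D = 2**,
i.e. `(j | j-1, j+1, j+2)` with indices mod 6 (Example 4): the capacity region equals the
set of nonnegative rate tuples satisfying, for every `j` (indices mod 6),
`R j + R (j+2) ≤ 1`, `R j + R (j+3) ≤ 1`, and
`R j + R (j+1) + R (j+2) + R (j+3) + R (j+4) ≤ 2`. -/
theorem capacity_region_six_message_U1_D2 :
    closure {R : Fin 6 → ℝ |
        IndexAchievable 6 (fun j => ({j - 1, j + 1, j + 2} : Finset (Fin 6))) R} =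
      {R : Fin 6 → ℝ | (∀ j, 0 ≤ R j) ∧
        ∀ j : Fin 6,
          R j + R (j + 2) ≤ 1 ∧
          R j + R (j + 3) ≤ 1 ∧
          R j + R (j + 1) + R (j + 2) + R (j + 3) + R (j + 4) ≤ 2} := by
  apply Set.Subset.antisymm
  · apply closure_minimal
    · intro R hR
      exact ⟨hR.1, converse_bound R hR⟩
    · have e1 : IsClosed (⋂ j : Fin 6, {R : Fin 6 → ℝ | 0 ≤ R j}) :=
        isClosed_iInter fun j => isClosed_le continuous_const (continuous_apply j)
      have e2 : IsClosed (⋂ j : Fin 6, {R : Fin 6 → ℝ | R j + R (j + 2) ≤ 1}) :=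
        isClosed_iInter fun j => isClosed_le (by fun_prop) (by fun_prop)
      have e3 : IsClosed (⋂ j : Fin 6, {R : Fin 6 → ℝ | R j + R (j + 3) ≤ 1}) :=
        isClosed_iInter fun j => isClosed_le (by fun_prop) (by fun_prop)
      have e4 : IsClosed (⋂ j : Fin 6, {R : Fin 6 → ℝ |
          R j + R (j + 1) + R (j + 2) + R (j + 3) + R (j + 4) ≤ 2}) :=
        isClosed_iInter fun j => isClosed_le (by fun_prop) (by fun_prop)
      convert e1.inter (e2.inter (e3.inter e4)) using 1
      ext R
      simp only [Set.mem_setOf_eq, Set.mem_inter_iff, Set.mem_iInter, forall_and]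
  · rintro R ⟨hR, h⟩
    exact ach_closure R hR h
end

section
/- Fourier–Motzkin elimination identity for the 5-cycle composite-coding region. Let (R_1,...,R_5) be a tuple of nonnegative reals, with indices understood modulo 5 (so R_6 = R_1, etc.). Then the following are equivalent: (i) there exist nonnegative reals S_1, S_2, S_3, S_4, S_5 with S_1 + S_2 + S_3 + S_4 + S_5 ≤ 1 such that R_j ≤ S_{j−1} + S_j for every j ∈ {1,...,5} (indices of S modulo 5); (ii) R_j + R_{j+2} ≤ 1 for every j ∈ {1,...,5} and R_1 + R_2 + R_3 + R_4 + R_5 ≤ 2. -/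
/-- The positive part of a real number, with its defining properties. -/
theorem pos_part_exists (x : ℝ) : ∃ s : ℝ, 0 ≤ s ∧ x ≤ s ∧ (s = 0 ∨ s = x) :=
  ⟨max 0 x, le_max_left _ _, le_max_right _ _, max_choice 0 x⟩

/-- **Fourier–Motzkin elimination identity for the 5-cycle composite-coding region**:
for nonnegative reals `R : Fin 5 → ℝ` (indices mod 5), the existence of nonnegative
composite rates `S : Fin 5 → ℝ` (where `S j` is the rate of the composite index for the
pair `{j, j+1}`) with `∑ S ≤ 1` and `R j ≤ S (j-1) + S j` for all `j` is equivalent to the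
inequalities `R j + R (j+2) ≤ 1` for all `j` together with `∑ R ≤ 2`. -/
theorem fourier_motzkin_five_cycle (R : Fin 5 → ℝ) (hR : ∀ j, 0 ≤ R j) :
    (∃ S : Fin 5 → ℝ, (∀ j, 0 ≤ S j) ∧
        S 0 + S 1 + S 2 + S 3 + S 4 ≤ 1 ∧
        ∀ j : Fin 5, R j ≤ S (j - 1) + S j) ↔
      ((∀ j : Fin 5, R j + R (j + 2) ≤ 1) ∧
        R 0 + R 1 + R 2 + R 3 + R 4 ≤ 2) := by
  constructor
  · rintro ⟨S, hS, hsum, h⟩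
    have h0 : R 0 ≤ S 4 + S 0 := h 0
    have h1 : R 1 ≤ S 0 + S 1 := h 1
    have h2 : R 2 ≤ S 1 + S 2 := h 2
    have h3 : R 3 ≤ S 2 + S 3 := h 3
    have h4 : R 4 ≤ S 3 + S 4 := h 4
    have p0 := hS 0
    have p1 := hS 1
    have p2 := hS 2
    have p3 := hS 3
    have p4 := hS 4
    refine ⟨fun j => ?_, by linarith⟩
    fin_cases j
    · change R 0 + R 2 ≤ 1
      linarith
    · change R 1 + R 3 ≤ 1
      linarith
    · change R 2 + R 4 ≤ 1
      linarith
    · change R 3 + R 0 ≤ 1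
      linarith
    · change R 4 + R 1 ≤ 1
      linarith
  · rintro ⟨h, hsum⟩
    have h0 : R 0 + R 2 ≤ 1 := h 0
    have h1 : R 1 + R 3 ≤ 1 := h 1
    have h2 : R 2 + R 4 ≤ 1 := h 2
    have h3 : R 3 + R 0 ≤ 1 := h 3
    have h4 : R 4 + R 1 ≤ 1 := h 4
    have p0 := hR 0
    have p1 := hR 1
    have p2 := hR 2
    have p3 := hR 3
    have p4 := hR 4
    -- choose the rate on the edge {4, 0}, then cover the remaining path greedily
    obtain ⟨t, ht, ht1, ht2⟩ := pos_part_exists (R 0 + R 2 + R 4 - 1)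
    have b1 : t + R 1 + R 3 ≤ 1 := by rcases ht2 with e | e <;> linarith
    have b2 : t + R 2 ≤ 1 := by rcases ht2 with e | e <;> linarith
    clear ht2
    obtain ⟨a, ha, ha1, ha2⟩ := pos_part_exists (R 0 - t)
    obtain ⟨b, hb, hb1, hb2⟩ := pos_part_exists (R 1 - a)
    obtain ⟨c, hc, hc1, hc2⟩ := pos_part_exists (R 2 - b)
    obtain ⟨e, he, he1, he2⟩ := pos_part_exists (R 4 - t)
    obtain ⟨d, hd, hd1, hd2⟩ := pos_part_exists (R 3 - c - e)
    refine ⟨![a, b, c, d + e, t], fun j => ?_, ?_, fun j => ?_⟩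
    · fin_cases j
      · exact ha
      · exact hb
      · exact hc
      · exact add_nonneg hd he
      · exact ht
    · change a + b + c + (d + e) + t ≤ 1
      rcases ha2 with q1 | q1 <;> rcases hb2 with q2 | q2 <;> rcases hc2 with q3 | q3 <;>
        rcases he2 with q4 | q4 <;> rcases hd2 with q5 | q5 <;> linarith
    · fin_cases j
      · change R 0 ≤ t + a
        linarith
      · change R 1 ≤ a + b
        linarith
      · change R 2 ≤ b + c
        linarith
      · change R 3 ≤ c + (d + e)
        linarith
      · change R 4 ≤ (d + e) + t
        linarith
end

section
/- Submodularity consequence for the 5-cycle outer bound. Let T : 2^{{1,...,5}} → ℝ be a set function satisfying T(∅) = 0, T({1,...,5}) = 1, T(J) ≤ T(K) whenever J ⊆ K ⊆ {1,...,5}, and T(J ∩ K) + T(J ∪ K) ≤ T(J) + T(K) for all J, K ⊆ {1,...,5}. Let (R_1,...,R_5) be nonnegative reals such that, with indices modulo 5, R_j ≤ T({j, j+2, j+3}) − T({j+2, j+3}) for every j ∈ {1,...,5}. Then R_1 + R_2 + R_3 + R_4 + R_5 ≤ 2. -/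
/-- **Submodularity consequence for the 5-cycle outer bound**: if `T` is a normalized
(`T ∅ = 0`, `T univ = 1`), monotone, submodular set function on subsets of `Fin 5`, and the
nonnegative reals `R j` satisfy `R j ≤ T {j, j+2, j+3} - T {j+2, j+3}` (indices mod 5),
then `R 0 + R 1 + R 2 + R 3 + R 4 ≤ 2`. -/
theorem five_cycle_submodular_sum_bound (T : Finset (Fin 5) → ℝ)
    (hempty : T ∅ = 0) (huniv : T Finset.univ = 1)
    (hmono : ∀ J K : Finset (Fin 5), J ⊆ K → T J ≤ T K)
    (hsub : ∀ J K : Finset (Fin 5), T (J ∩ K) + T (J ∪ K) ≤ T J + T K)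
    (R : Fin 5 → ℝ) (hR : ∀ j, 0 ≤ R j)
    (h : ∀ j : Fin 5, R j ≤ T {j, j + 2, j + 3} - T {j + 2, j + 3}) :
    R 0 + R 1 + R 2 + R 3 + R 4 ≤ 2 := by
  have h0 : R 0 ≤ T {0, 2, 3} - T {2, 3} := h 0
  have h1 : R 1 ≤ T {1, 3, 4} - T {3, 4} := h 1
  have h2 : R 2 ≤ T {2, 4, 0} - T {4, 0} := h 2
  have h3 : R 3 ≤ T {3, 0, 1} - T {0, 1} := h 3
  have h4 : R 4 ≤ T {4, 1, 2} - T {1, 2} := h 4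
  have m0 : T {0, 2, 3} ≤ T Finset.univ := hmono _ _ (Finset.subset_univ _)
  have m1 : T {1, 3, 4} ≤ T Finset.univ := hmono _ _ (Finset.subset_univ _)
  have m2 : T {2, 4} ≤ T {2, 3, 4} := hmono _ _ (by decide)
  have s0 : T {3} + T {2, 3, 4} ≤ T {2, 3} + T {3, 4} := by
    convert hsub {2, 3} {3, 4} using 3 <;> decide
  have s1 : T {4} + T {2, 4, 0} ≤ T {2, 4} + T {4, 0} := by
    convert hsub {2, 4} {4, 0} using 3 <;> decide
  have s2 : T ∅ + T {3, 0, 1} ≤ T {3} + T {0, 1} := by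
    convert hsub {3} {0, 1} using 3 <;> decide
  have s3 : T ∅ + T {4, 1, 2} ≤ T {4} + T {1, 2} := by
    convert hsub {4} {1, 2} using 3 <;> decide
  linarith
end
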